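/- arXiv:2005.05492 — 15 statements merged into one kernel-verified Lean document; each statement's English description precedes it below -/
import Mathlib

section
/- Let n ≥ 3 and call a subset F of Ê_n a face if either F = Ê_n or there exists a linear functional ℓ on the real vector space of n×n real matrices with zero diagonal such that ℓ(x) ≥ 0 for all x ∈ Ê_n and F = {x ∈ Ê_n : ℓ(x) = 0}. Then for every bijection Φ from the set of faces of Ê_n to itself such that both Φ and Φ⁻¹ preserve inclusion, there exists a permutation π of Fin n such that either Φ(F) = {ψ(A) : A ∈ F} for all faces F, where ψ(A)_{π(i)π(j)} = A_{ij} for all i ≠ j, or Φ(F) = {ψ(A) : A ∈ F} for all faces F, where ψ(A)_{π(i)π(j)} = A_{ji} for all i ≠ j. (The combinatorial symmetry group of Ê_n is S_n × ℤ₂, generated by coordinate permutations and the transpose map.) -/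
/-- The cone of quasi-semimetrics on `n` points. -/
def QSM (n : ℕ) : Set (Fin n → Fin n → ℝ) :=
  {A | (∀ i, A i i = 0) ∧ (∀ i j : Fin n, i ≠ j → 0 ≤ A i j) ∧
    (∀ i j k : Fin n, i ≠ j → j ≠ k → i ≠ k → A i k ≤ A i j + A j k)}

/-- Faces of the cone `QSM n`: either the improper face `QSM n` itself, or the zero
set in `QSM n` of a linear functional which is nonnegative on `QSM n`. -/
def IsFace (n : ℕ) (F : Set (Fin n → Fin n → ℝ)) : Prop :=
  F = QSM n ∨ ∃ ℓ : (Fin n → Fin n → ℝ) →ₗ[ℝ] ℝ,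
    (∀ x ∈ QSM n, 0 ≤ ℓ x) ∧ F = {x ∈ QSM n | ℓ x = 0}

namespace QS

/-- Matrices. -/
abbrev Mt (n : ℕ) := Fin n → Fin n → ℝ

/-- Raw constraint indices. -/
abbrev Raw (n : ℕ) := (Fin n × Fin n) ⊕ (Fin n × Fin n × Fin n)

/-- Valid constraint indices. -/
def valid {n : ℕ} : Raw n → Prop
  | Sum.inl (i, j) => i ≠ j
  | Sum.inr (i, j, k) => i ≠ j ∧ j ≠ k ∧ i ≠ k

/-- Constraint functionals. -/
def ev {n : ℕ} : Raw n → (Mt n →ₗ[ℝ] ℝ)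
  | Sum.inl (i, j) => (LinearMap.proj j : (Fin n → ℝ) →ₗ[ℝ] ℝ) ∘ₗ LinearMap.proj i
  | Sum.inr (i, j, k) =>
      (LinearMap.proj j : (Fin n → ℝ) →ₗ[ℝ] ℝ) ∘ₗ LinearMap.proj i
      + (LinearMap.proj k : (Fin n → ℝ) →ₗ[ℝ] ℝ) ∘ₗ LinearMap.proj j
      - (LinearMap.proj k : (Fin n → ℝ) →ₗ[ℝ] ℝ) ∘ₗ LinearMap.proj i

@[simp] lemma ev_inl {n : ℕ} (i j : Fin n) (A : Mt n) : ev (Sum.inl (i, j)) A = A i j := rfl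
@[simp] lemma ev_inr {n : ℕ} (i j k : Fin n) (A : Mt n) :
    ev (Sum.inr (i, j, k)) A = A i j + A j k - A i k := rfl

/-- Constraints. -/
abbrev Con (n : ℕ) := {c : Raw n // valid c}

/-- Nonnegativity constraint. -/
def nn {n : ℕ} (i j : Fin n) (h : i ≠ j) : Con n := ⟨Sum.inl (i, j), h⟩
/-- Triangle constraint. -/
def tt {n : ℕ} (i j k : Fin n) (h : i ≠ j ∧ j ≠ k ∧ i ≠ k) : Con n := ⟨Sum.inr (i, j, k), h⟩

@[simp] lemma nn_inj {n : ℕ} {i j a b : Fin n} {h : i ≠ j} {g : a ≠ b} :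
    nn i j h = nn a b g ↔ i = a ∧ j = b := by
  simp [nn, Subtype.ext_iff]

@[simp] lemma tt_inj {n : ℕ} {i j k a b c : Fin n} {h : i ≠ j ∧ j ≠ k ∧ i ≠ k}
    {g : a ≠ b ∧ b ≠ c ∧ a ≠ c} : tt i j k h = tt a b c g ↔ i = a ∧ j = b ∧ k = c := by
  simp [tt, Subtype.ext_iff]

@[simp] lemma nn_ne_tt {n : ℕ} {i j a b c : Fin n} {h : i ≠ j}
    {g : a ≠ b ∧ b ≠ c ∧ a ≠ c} : nn i j h ≠ tt a b c g := by
  simp [nn, tt, Subtype.ext_iff]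

@[simp] lemma tt_ne_nn {n : ℕ} {i j a b c : Fin n} {h : i ≠ j}
    {g : a ≠ b ∧ b ≠ c ∧ a ≠ c} : tt a b c g ≠ nn i j h := by
  simp [nn, tt, Subtype.ext_iff]

@[simp] lemma ev_nn {n : ℕ} (i j : Fin n) (h : i ≠ j) (A : Mt n) :
    ev (nn i j h).1 A = A i j := rfl
@[simp] lemma ev_tt {n : ℕ} (i j k : Fin n) (h : i ≠ j ∧ j ≠ k ∧ i ≠ k) (A : Mt n) :
    ev (tt i j k h).1 A = A i j + A j k - A i k := rfl

lemma con_cases {n : ℕ} (c : Con n) :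
    (∃ i j h, c = nn i j h) ∨ (∃ i j k h, c = tt i j k h) := by
  obtain ⟨c, hc⟩ := c
  rcases c with ⟨i, j⟩ | ⟨i, j, k⟩
  · exact Or.inl ⟨i, j, hc, rfl⟩
  · exact Or.inr ⟨i, j, k, hc, rfl⟩

lemma mem_QSM {n : ℕ} (A : Mt n) :
    A ∈ QSM n ↔ (∀ i, A i i = 0) ∧ ∀ c : Con n, 0 ≤ ev c.1 A := by
  constructor
  · rintro ⟨h0, h1, h2⟩
    refine ⟨h0, fun c => ?_⟩
    rcases con_cases c with ⟨i, j, h, rfl⟩ | ⟨i, j, k, h, rfl⟩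
    · exact h1 i j h
    · have := h2 i j k h.1 h.2.1 h.2.2
      simp only [tt, ev_inr]; linarith
  · rintro ⟨h0, h1⟩
    refine ⟨h0, fun i j h => h1 (nn i j h), fun i j k a b c => ?_⟩
    have := h1 (tt i j k ⟨a, b, c⟩)
    simp only [tt, ev_inr] at this; linarith

lemma zero_mem {n : ℕ} : (0 : Mt n) ∈ QSM n := by
  rw [mem_QSM]; simp

lemma add_mem {n : ℕ} {A B : Mt n} (hA : A ∈ QSM n) (hB : B ∈ QSM n) : A + B ∈ QSM n := by
  rw [mem_QSM] at *
  refine ⟨fun i => by simp [hA.1 i, hB.1 i], fun c => ?_⟩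
  rw [map_add]; exact add_nonneg (hA.2 c) (hB.2 c)

lemma smul_mem {n : ℕ} {A : Mt n} (hA : A ∈ QSM n) {r : ℝ} (hr : 0 ≤ r) : r • A ∈ QSM n := by
  rw [mem_QSM] at *
  refine ⟨fun i => by simp [hA.1 i], fun c => ?_⟩
  rw [map_smul]; exact mul_nonneg hr (hA.2 c)

lemma sum_mem {n : ℕ} {ι : Type*} (s : Finset ι) (f : ι → Mt n) (h : ∀ i ∈ s, f i ∈ QSM n) :
    ∑ i ∈ s, f i ∈ QSM n := by
  classical
  induction s using Finset.induction_on with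
  | empty => simpa using zero_mem
  | insert a s ha ih =>
    rw [Finset.sum_insert ha]
    exact add_mem (h a (by simp)) (ih fun i hi => h i (by simp [hi]))

/-- Facets. -/
def Fc {n : ℕ} (c : Con n) : Set (Mt n) := {x ∈ QSM n | ev c.1 x = 0}

lemma face_sub {n : ℕ} {F : Set (Mt n)} (hF : IsFace n F) : F ⊆ QSM n := by
  rcases hF with rfl | ⟨l, h, rfl⟩
  · exact subset_rfl
  · exact fun x hx => hx.1

lemma Fc_face {n : ℕ} (c : Con n) : IsFace n (Fc c) :=
  Or.inr ⟨ev c.1, fun x hx => ((mem_QSM x).1 hx).2 c, rfl⟩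

lemma inter_face {n : ℕ} (c d : Con n) : IsFace n (Fc c ∩ Fc d) := by
  refine Or.inr ⟨ev c.1 + ev d.1, fun x hx => ?_, ?_⟩
  · exact add_nonneg (((mem_QSM x).1 hx).2 c) (((mem_QSM x).1 hx).2 d)
  · ext x
    simp only [Fc, Set.mem_inter_iff, Set.mem_ofPred_eq, LinearMap.add_apply]
    constructor
    · rintro ⟨⟨h, h1⟩, _, h2⟩; exact ⟨h, by rw [h1, h2, add_zero]⟩
    · rintro ⟨h, h1⟩
      have a := ((mem_QSM x).1 h).2 c
      have b := ((mem_QSM x).1 h).2 d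
      exact ⟨⟨h, by linarith⟩, h, by linarith⟩

lemma face_repr {n : ℕ} {F : Set (Mt n)} (hF : IsFace n F) (y : Mt n) :
    y ∈ F ↔ y ∈ QSM n ∧ ∀ c : Con n, F ⊆ Fc c → y ∈ Fc c := by
  classical
  refine ⟨fun h => ⟨face_sub hF h, fun c hc => hc h⟩, ?_⟩
  rintro ⟨hy, hc⟩
  rcases hF with rfl | ⟨l, hl, rfl⟩
  · exact hy
  set F : Set (Mt n) := {x ∈ QSM n | l x = 0} with hFdef
  have key : ∀ c : Con n, ∃ z ∈ F, ev c.1 y ≤ ev c.1 z := by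
    intro c
    by_cases h : F ⊆ Fc c
    · exact ⟨0, ⟨zero_mem, by simp⟩, by rw [(hc c h).2]; simp⟩
    · obtain ⟨z, hz, hzc⟩ := Set.not_subset.1 h
      have hz0 : ev c.1 z ≠ 0 := fun e => hzc ⟨hz.1, e⟩
      have hzp : 0 < ev c.1 z := lt_of_le_of_ne (((mem_QSM z).1 hz.1).2 c) (Ne.symm hz0)
      refine ⟨(ev c.1 y / ev c.1 z) • z, ⟨smul_mem hz.1 ?_, ?_⟩, ?_⟩
      · exact div_nonneg (((mem_QSM y).1 hy).2 c) hzp.le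
      · rw [map_smul, hz.2, smul_zero]
      · rw [map_smul, smul_eq_mul, div_mul_cancel₀ _ hz0]
  choose z hzF hz using key
  have : Fintype (Con n) := Fintype.ofFinite _
  set x : Mt n := ∑ c, z c with hx
  have hxQ : x ∈ QSM n := sum_mem _ _ fun c _ => (hzF c).1
  have hxl : l x = 0 := by
    rw [hx, map_sum]; exact Finset.sum_eq_zero fun c _ => (hzF c).2
  have hxy : x - y ∈ QSM n := by
    rw [mem_QSM]
    refine ⟨fun i => ?_, fun c => ?_⟩
    · simp [((mem_QSM x).1 hxQ).1 i, ((mem_QSM y).1 hy).1 i]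
    · rw [map_sub, sub_nonneg, hx, map_sum]
      refine (hz c).trans ?_
      exact Finset.single_le_sum (f := fun d => ev c.1 (z d))
        (fun d _ => ((mem_QSM (z d)).1 (hzF d).1).2 c) (Finset.mem_univ c)
  have h1 := hl _ hxy
  rw [map_sub, hxl] at h1
  have h2 := hl _ hy
  exact ⟨hy, by linarith⟩

/-- Witness for a nonnegativity facet. -/
noncomputable def wN {n : ℕ} (i j : Fin n) : Mt n := fun a b =>
  if a = b then 0 else if a = i ∧ b = j then 0 else if a = i then 2 else if b = j then 2 else 3

/-- Witness for a triangle facet. -/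
noncomputable def wT {n : ℕ} (i j k : Fin n) : Mt n := fun a b =>
  if a = b then 0 else if a = i ∧ b = k then 2 else
    if a = i ∧ b = j then 1 else if a = j ∧ b = k then 1 else 3/2

lemma wN_spec {n : ℕ} (i j : Fin n) (h : i ≠ j) (d : Con n) :
    0 ≤ ev d.1 (wN i j) ∧ (ev d.1 (wN i j) = 0 ↔ d = nn i j h) := by
  rcases con_cases d with ⟨a, b, g, rfl⟩ | ⟨a, b, c, g, rfl⟩
  · simp only [ev_nn, wN, nn_inj, g, if_false]
    split_ifs <;> norm_num <;> grind
  · obtain ⟨g1, g2, g3⟩ := g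
    simp only [ev_tt, wN, tt_ne_nn, iff_false, g1, g2, g3, if_false]
    split_ifs <;> norm_num <;> grind

lemma wT_spec {n : ℕ} (i j k : Fin n) (h : i ≠ j ∧ j ≠ k ∧ i ≠ k) (d : Con n) :
    0 ≤ ev d.1 (wT i j k) ∧ (ev d.1 (wT i j k) = 0 ↔ d = tt i j k h) := by
  rcases con_cases d with ⟨a, b, g, rfl⟩ | ⟨a, b, c, g, rfl⟩
  · simp only [ev_nn, wT, nn_ne_tt, iff_false, g, if_false]
    split_ifs <;> norm_num
  · obtain ⟨g1, g2, g3⟩ := g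
    obtain ⟨k1, k2, k3⟩ := h
    simp only [ev_tt, wT, tt_inj, g1, g2, g3, if_false]
    split_ifs <;> norm_num <;> grind

lemma Fc_witness {n : ℕ} (c : Con n) : ∃ x ∈ Fc c, ∀ d : Con n, x ∈ Fc d → d = c := by
  rcases con_cases c with ⟨i, j, h, rfl⟩ | ⟨i, j, k, h, rfl⟩
  · refine ⟨wN i j, ⟨(mem_QSM _).2 ⟨fun i => by simp [wN], fun d => (wN_spec i j h d).1⟩,
      (wN_spec i j h _).2.2 rfl⟩, fun d hd => (wN_spec i j h _).2.1 hd.2⟩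
  · refine ⟨wT i j k, ⟨(mem_QSM _).2 ⟨fun i => by simp [wT], fun d => (wT_spec i j k h d).1⟩,
      (wT_spec i j k h _).2.2 rfl⟩, fun d hd => (wT_spec i j k h _).2.1 hd.2⟩

lemma Fc_sub {n : ℕ} {c d : Con n} (h : Fc c ⊆ Fc d) : c = d := by
  obtain ⟨x, hx, hd⟩ := Fc_witness c
  exact (hd d (h hx)).symm

lemma Fc_ne {n : ℕ} (c : Con n) : Fc c ≠ QSM n := by
  intro e
  have h1 : (fun a b => if a = b then 0 else 1 : Mt n) ∈ QSM n := by
    refine ⟨fun i => by simp, fun i j h => by simp [h], fun i j k a b c => by simp [a, b, c]⟩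
  rw [← e] at h1
  have h2 := h1.2
  rcases con_cases c with ⟨i, j, h, rfl⟩ | ⟨i, j, k, h, rfl⟩
  · simp [nn, h] at h2
  · simp [tt, h.1, h.2.1, h.2.2] at h2

lemma face_coatom {n : ℕ} {F : Set (Mt n)} (hF : IsFace n F) (hne : F ≠ QSM n) :
    ∃ c : Con n, F ⊆ Fc c := by
  by_contra! hc
  apply hne
  ext y
  rw [face_repr hF y]
  exact ⟨fun h => h.1, fun h => ⟨h, fun c hcc => absurd hcc (hc c)⟩⟩

/-- The type of faces. -/
abbrev Face (n : ℕ) := {F : Set (Fin n → Fin n → ℝ) // IsFace n F}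

/-- facet as face -/
def fc {n : ℕ} (c : Con n) : Face n := ⟨Fc c, Fc_face c⟩

lemma exists_sigma_aux {n : ℕ} (Φ : Face n ≃ Face n)
    (hmono : ∀ F G : Face n, (F : Set (Mt n)) ⊆ G ↔ (Φ F : Set (Mt n)) ⊆ Φ G) (c : Con n) :
    ∃ d : Con n, Φ (fc c) = fc d := by
  let top : Face n := ⟨QSM n, Or.inl rfl⟩
  have htop : ∀ F : Face n, (F : Set (Mt n)) ⊆ top := fun F => face_sub F.2
  have ht : Φ top = top := by
    apply Subtype.ext
    apply (htop _).antisymm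
    have := (hmono (Φ.symm top) top).1 (htop _)
    simpa using this
  have hne : (Φ (fc c) : Set (Mt n)) ≠ QSM n := by
    intro e
    have : Φ (fc c) = Φ top := by rw [ht]; exact Subtype.ext e
    have := Φ.injective this
    exact Fc_ne c (congrArg Subtype.val this)
  obtain ⟨d, hd⟩ := face_coatom (Φ (fc c)).2 hne
  refine ⟨d, ?_⟩
  have h1 : (fc c : Set (Mt n)) ⊆ Φ.symm (fc d) := by
    rw [hmono, Equiv.apply_symm_apply]; exact hd
  have hne2 : (Φ.symm (fc d) : Set (Mt n)) ≠ QSM n := by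
    intro e
    have : Φ.symm (fc d) = top := Subtype.ext e
    rw [Equiv.symm_apply_eq, ht] at this
    exact Fc_ne d (congrArg Subtype.val this)
  obtain ⟨e, he⟩ := face_coatom (Φ.symm (fc d)).2 hne2
  have hce : c = e := Fc_sub (h1.trans he)
  subst hce
  have : fc c = Φ.symm (fc d) := Subtype.ext (h1.antisymm he)
  rw [this]; simp

lemma hmono_symm {n : ℕ} {Φ : Face n ≃ Face n}
    (hmono : ∀ F G : Face n, (F : Set (Mt n)) ⊆ G ↔ (Φ F : Set (Mt n)) ⊆ Φ G) (F G : Face n) :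
    (F : Set (Mt n)) ⊆ G ↔ (Φ.symm F : Set (Mt n)) ⊆ Φ.symm G := by
  rw [hmono (Φ.symm F)]; simp

lemma fc_inj {n : ℕ} {c d : Con n} (h : fc c = fc d) : c = d :=
  Fc_sub (congrArg Subtype.val h).subset

lemma exists_sigma {n : ℕ} (Φ : Face n ≃ Face n)
    (hmono : ∀ F G : Face n, (F : Set (Mt n)) ⊆ G ↔ (Φ F : Set (Mt n)) ⊆ Φ G) :
    ∃ σ : Con n ≃ Con n, ∀ c, Φ (fc c) = fc (σ c) := by
  choose s hs using exists_sigma_aux Φ hmono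
  choose t ht using exists_sigma_aux Φ.symm (hmono_symm hmono)
  refine ⟨⟨s, t, fun c => ?_, fun c => ?_⟩, hs⟩
  · apply fc_inj; rw [← ht, ← hs]; simp
  · apply fc_inj; rw [← hs, ← ht]; simp

/-- The intersection of two facets lies in a third. -/
def rel3 {n : ℕ} (c d e : Con n) : Prop := Fc c ∩ Fc d ⊆ Fc e

lemma rel3_sigma {n : ℕ} {Φ : Face n ≃ Face n}
    (hmono : ∀ F G : Face n, (F : Set (Mt n)) ⊆ G ↔ (Φ F : Set (Mt n)) ⊆ Φ G)
    {σ : Con n ≃ Con n} (hσ : ∀ c, Φ (fc c) = fc (σ c)) (c d e : Con n) :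
    rel3 c d e ↔ rel3 (σ c) (σ d) (σ e) := by
  let H : Face n := ⟨_, inter_face c d⟩
  let H' : Face n := ⟨_, inter_face (σ c) (σ d)⟩
  have h1 : (Φ H : Set (Mt n)) ⊆ H' := by
    apply Set.subset_inter
    · have := (hmono H (fc c)).1 Set.inter_subset_left
      rwa [hσ] at this
    · have := (hmono H (fc d)).1 Set.inter_subset_right
      rwa [hσ] at this
  have h2 : (Φ.symm H' : Set (Mt n)) ⊆ H := by
    apply Set.subset_inter
    · refine (hmono (Φ.symm H') (fc c)).2 ?_
      rw [hσ, Equiv.apply_symm_apply]; exact Set.inter_subset_left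
    · refine (hmono (Φ.symm H') (fc d)).2 ?_
      rw [hσ, Equiv.apply_symm_apply]; exact Set.inter_subset_right
  have h3 : Φ H = H' := by
    apply Subtype.ext
    apply h1.antisymm
    have := (hmono _ _).1 h2
    simpa using this
  have := hmono H (fc e)
  rw [h3, hσ] at this
  exact this

/-- Oriented cut. -/
noncomputable def cut {n : ℕ} (S : Fin n → Prop) : Mt n := fun a b =>
  open Classical in if S a ∧ ¬ S b then 1 else 0

/-- Tightness of a constraint on a cut. -/
def tc {n : ℕ} (S : Fin n → Prop) : Raw n → Prop
  | Sum.inl (i, j) => S i → S j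
  | Sum.inr (i, j, k) => (S i → S k → S j) ∧ (S j → S i ∨ S k)

lemma ev_cut {n : ℕ} (S : Fin n → Prop) (c : Raw n) : ev c (cut S) = 0 ↔ tc S c := by
  rcases c with ⟨i, j⟩ | ⟨i, j, k⟩
  · simp [tc, cut]
  · by_cases h1 : S i <;> by_cases h2 : S j <;> by_cases h3 : S k <;> simp [tc, cut, h1, h2, h3]

lemma cut_mem {n : ℕ} (S : Fin n → Prop) : cut S ∈ QSM n := by
  refine ⟨fun i => by simp [cut], fun i j _ => ?_, fun i j k _ _ _ => ?_⟩
  · simp only [cut]; split_ifs <;> norm_num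
  · by_cases h1 : S i <;> by_cases h2 : S j <;> by_cases h3 : S k <;> simp [cut, h1, h2, h3]

lemma rel3_cut {n : ℕ} {c d e : Con n} (h : rel3 c d e) (S : Fin n → Prop)
    (hc : tc S c.1) (hd : tc S d.1) : tc S e.1 := by
  have := h (⟨⟨cut_mem S, (ev_cut S _).2 hc⟩, cut_mem S, (ev_cut S _).2 hd⟩ :
    cut S ∈ Fc c ∩ Fc d)
  exact (ev_cut S _).1 this.2

lemma cut_NT {n : ℕ} {i j k l m : Fin n} (hij : i ≠ j) (h : k ≠ l ∧ l ≠ m ∧ k ≠ m) (e : Con n)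
    (he : rel3 (nn i j hij) (tt k l m h) e) :
    e.1 = Sum.inl (i, j) ∨ e.1 = Sum.inl (i, l) ∨ e.1 = Sum.inl (l, j) ∨
    e.1 = Sum.inr (k, l, m) ∨ e.1 = Sum.inr (m, l, k) := by
  obtain ⟨h1, h2, h3⟩ := h
  have C := rel3_cut he
  rcases con_cases e with ⟨a, b, g, rfl⟩ | ⟨a, b, c, g, rfl⟩
  · simp only [nn, tt, tc] at C
    have c1 := C (fun x => x = a)
    have c2 := C (fun x => x ≠ b)
    simp only [nn, Sum.inl.injEq, Prod.mk.injEq, reduceCtorEq]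
    grind +splitImp
  · obtain ⟨g1, g2, g3⟩ := g
    simp only [nn, tt, tc] at C
    have c1 := C (fun x => x = b)
    have c2 := C (fun x => x ≠ b)
    have hb : b = l := by grind +splitImp
    subst hb
    have key : ∀ p, (p = k ∨ p = m) → p = a ∨ p = c := by
      intro p hp
      have c3 := C (fun x => x = b ∨ x = p)
      have c4 := C (fun x => ¬ (x = b ∨ x = p))
      grind +splitImp
    have k1 := key k (Or.inl rfl)
    have k2 := key m (Or.inr rfl)
    simp only [tt, Sum.inr.injEq, Prod.mk.injEq, reduceCtorEq]
    grind +splitImp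

lemma cut_NN' {n : ℕ} {i j k l : Fin n} (hij : i ≠ j) (hkl : k ≠ l) (hjk : j ≠ k) (hil : i ≠ l)
    (a b : Fin n) (g : a ≠ b) (he : rel3 (nn i j hij) (nn k l hkl) (nn a b g)) :
    (a = i ∧ b = j) ∨ (a = k ∧ b = l) := by
  have C := rel3_cut he
  simp only [nn, tc] at C
  have c1 := C (fun x => x = a)
  have c2 := C (fun x => x ≠ b)
  have c3 := C (fun x => x = i ∨ x = j)
  have c4 := C (fun x => x = k ∨ x = l)
  grind +splitImp

lemma cut_NN_consec {n : ℕ} {i j k : Fin n} (hij : i ≠ j) (hjk : j ≠ k) (hik : i ≠ k)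
    (e : Con n) (he : rel3 (nn i j hij) (nn j k hjk) e) :
    e.1 = Sum.inl (i, j) ∨ e.1 = Sum.inl (j, k) ∨ e.1 = Sum.inl (i, k) ∨
    e.1 = Sum.inr (i, j, k) ∨ e.1 = Sum.inr (k, j, i) := by
  have C := rel3_cut he
  rcases con_cases e with ⟨a, b, g, rfl⟩ | ⟨a, b, c, g, rfl⟩
  · simp only [nn, tc] at C
    have c1 := C (fun x => x = a)
    have c2 := C (fun x => x ≠ b)
    simp only [nn, Sum.inl.injEq, Prod.mk.injEq, reduceCtorEq]
    grind +splitImp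
  · obtain ⟨g1, g2, g3⟩ := g
    simp only [nn, tt, tc] at C
    have c1 := C (fun x => x = b)
    have c2 := C (fun x => x ≠ b)
    have c3 := C (fun x => x = b ∨ x = k)
    have c4 := C (fun x => ¬ (x = b ∨ x = i))
    simp only [tt, Sum.inr.injEq, Prod.mk.injEq, reduceCtorEq]
    grind +splitImp

lemma cut_NN_non {n : ℕ} {i j k l : Fin n} (hij : i ≠ j) (hkl : k ≠ l) (hjk : j ≠ k) (hil : i ≠ l)
    (e : Con n) (he : rel3 (nn i j hij) (nn k l hkl) e) :
    e.1 = Sum.inl (i, j) ∨ e.1 = Sum.inl (k, l) := by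
  rcases con_cases e with ⟨a, b, g, rfl⟩ | ⟨a, b, c, g, rfl⟩
  · rcases cut_NN' hij hkl hjk hil a b g he with ⟨rfl, rfl⟩ | ⟨rfl, rfl⟩ <;> simp [nn]
  · exfalso
    obtain ⟨g1, g2, g3⟩ := g
    have C := rel3_cut he
    simp only [nn, tt, tc] at C
    have c1 := C (fun x => x = b)
    have c2 := C (fun x => x ≠ b)
    grind +splitImp

lemma rel3_swap {n : ℕ} {c d e : Con n} (h : rel3 c d e) : rel3 d c e := by
  unfold rel3 at *; rwa [Set.inter_comm]

/-- Six facets contain the intersection. -/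
def R {n : ℕ} (c d : Con n) : Prop :=
  c ≠ d ∧ ∃ s : Finset (Con n), 6 ≤ s.card ∧ ∀ e ∈ s, rel3 c d e

lemma not_six {n : ℕ} {c d : Con n} (a1 a2 a3 a4 a5 : Raw n)
    (h : ∀ e : Con n, rel3 c d e → e.1 = a1 ∨ e.1 = a2 ∨ e.1 = a3 ∨ e.1 = a4 ∨ e.1 = a5) :
    ¬ R c d := by
  rintro ⟨-, s, hs, hs2⟩
  have h1 : s.map (Function.Embedding.subtype _) ⊆ {a1, a2, a3, a4, a5} := by
    intro x hx
    simp only [Finset.mem_map, Function.Embedding.subtype_apply] at hx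
    obtain ⟨e, he, rfl⟩ := hx
    simpa using h e (hs2 e he)
  have h2 := Finset.card_le_card h1
  rw [Finset.card_map] at h2
  have h3 : ({a1, a2, a3, a4, a5} : Finset (Raw n)).card ≤ 5 := Finset.card_le_five
  omega

lemma R_N {n : ℕ} {i j : Fin n} (h : i ≠ j) (d : Con n) (hR : R (nn i j h) d) :
    d = nn j i h.symm := by
  by_contra hd
  rcases con_cases d with ⟨k, l, g, rfl⟩ | ⟨k, l, m, g, rfl⟩
  · rw [nn_inj] at hd
    have hne : ¬ (i = k ∧ j = l) := by
      rintro ⟨rfl, rfl⟩; exact hR.1 rfl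
    by_cases hjk : j = k
    · subst hjk
      have hil : i ≠ l := fun e => hd ⟨rfl, e.symm⟩
      exact not_six _ _ _ _ _ (cut_NN_consec h g hil) hR
    · by_cases hil : i = l
      · subst hil
        exact not_six _ _ _ _ _ (fun e he => cut_NN_consec g h (Ne.symm hjk) e (rel3_swap he)) hR
      · refine not_six (Sum.inl (i, j)) (Sum.inl (k, l)) (Sum.inl (k, l)) (Sum.inl (k, l))
          (Sum.inl (k, l)) (fun e he => ?_) hR
        have := cut_NN_non h g hjk hil e he
        tauto
  · exact not_six _ _ _ _ _ (cut_NT h g) hR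

lemma six {n : ℕ} {i j m : Fin n} (hij : i ≠ j) (him : i ≠ m) (hjm : j ≠ m) (c d : Con n)
    (hne : c ≠ d) (h : ∀ A ∈ QSM n, ev c.1 A = 0 → ev d.1 A = 0 → A i j = 0 ∧ A j i = 0) :
    R c d := by
  refine ⟨hne, {nn i j hij, nn j i hij.symm, tt i j m ⟨hij, hjm, him⟩, tt j i m ⟨hij.symm, him, hjm⟩,
    tt m i j ⟨him.symm, hij, hjm.symm⟩, tt m j i ⟨hjm.symm, hij.symm, him.symm⟩}, ?_, ?_⟩
  · repeat rw [Finset.card_insert_of_notMem (by simp [hij, hij.symm, him, him.symm, hjm, hjm.symm])]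
    simp
  · intro e he x hx
    obtain ⟨⟨hx, h1⟩, _, h2⟩ := hx
    obtain ⟨h3, h4⟩ := h x hx h1 h2
    refine ⟨hx, ?_⟩
    have t1 := hx.2.2 i j m hij hjm him
    have t2 := hx.2.2 j i m hij.symm him hjm
    have t3 := hx.2.2 m i j him.symm hij hjm.symm
    have t4 := hx.2.2 m j i hjm.symm hij.symm him.symm
    simp only [Finset.mem_insert, Finset.mem_singleton] at he
    rcases he with rfl | rfl | rfl | rfl | rfl | rfl <;> simp <;> linarith

lemma R_NN {n : ℕ} (hn : 3 ≤ n) {i j : Fin n} (h : i ≠ j) : R (nn i j h) (nn j i h.symm) := by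
  obtain ⟨m, hm⟩ : ∃ m : Fin n, m ∉ ({i, j} : Finset (Fin n)) := by
    by_contra! hc
    have h1 : (Finset.univ : Finset (Fin n)) ⊆ {i, j} := fun x _ => hc x
    have h2 := Finset.card_le_card h1
    have h3 : ({i, j} : Finset (Fin n)).card ≤ 2 := Finset.card_le_two
    simp at h2; omega
  simp only [Finset.mem_insert, Finset.mem_singleton, not_or] at hm
  refine six h (Ne.symm hm.1) (Ne.symm hm.2) _ _ ?_ ?_
  · simp [h]
  · intro A _ h1 h2
    exact ⟨h1, h2⟩

lemma R_T {n : ℕ} {i j k : Fin n} (h : i ≠ j ∧ j ≠ k ∧ i ≠ k) :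
    ∃ d d', d ≠ d' ∧ R (tt i j k h) d ∧ R (tt i j k h) d' := by
  obtain ⟨h1, h2, h3⟩ := h
  refine ⟨tt i k j ⟨h3, h2.symm, h1⟩, tt j i k ⟨h1.symm, h3, h2⟩, ?_, ?_, ?_⟩
  · simp [h1]
  · refine six h2 h1.symm h3.symm _ _ (by simp [h2]) ?_
    intro A hA a b
    simp at a b
    have p := hA.2.1 j k h2
    have q := hA.2.1 k j h2.symm
    constructor <;> linarith
  · refine six h1 h3 h2 _ _ (by simp [h1]) ?_
    intro A hA a b
    simp at a b
    have p := hA.2.1 i j h1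
    have q := hA.2.1 j i h1.symm
    constructor <;> linarith

/-- Witness for a consecutive pair. -/
noncomputable def wC {n : ℕ} (i j k : Fin n) : Mt n := fun a b =>
  if a = b then 0 else if (a = i ∧ b = j) ∨ (a = j ∧ b = k) ∨ (a = i ∧ b = k) then 0 else 1

lemma consec_T {n : ℕ} {i j k a b c : Fin n} (hij : i ≠ j) (hjk : j ≠ k) (hik : i ≠ k)
    (g : a ≠ b ∧ b ≠ c ∧ a ≠ c) (h : rel3 (nn i j hij) (nn j k hjk) (tt a b c g)) :
    a = i ∧ b = j ∧ c = k := by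
  rcases cut_NN_consec hij hjk hik _ h with e | e | e | e | e
  · simp [tt] at e
  · simp [tt] at e
  · simp [tt] at e
  · simpa [tt] using e
  · exfalso
    simp only [tt, Sum.inr.injEq, Prod.mk.injEq] at e
    obtain ⟨rfl, rfl, rfl⟩ := e
    have hQ : wC c b a ∈ QSM n := by
      refine ⟨fun x => by simp [wC], fun x y _ => ?_, fun x y z h1 h2 h3 => ?_⟩
      · simp only [wC]; split_ifs <;> norm_num
      · simp only [wC, h1, h2, h3, if_false]
        split_ifs <;> norm_num <;> grind
    have h1 := h (⟨⟨hQ, by simp [wC]⟩, hQ, by simp [wC]⟩ : wC c b a ∈ Fc (nn c b hij) ∩ Fc (nn b a hjk))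
    have h2 := h1.2
    simp [wC, g.1, g.2.1, g.2.2, hij, hjk, hik] at h2

lemma rel3_trans {n : ℕ} {i j k : Fin n} (hij : i ≠ j) (hjk : j ≠ k) (hik : i ≠ k) :
    rel3 (nn i j hij) (nn j k hjk) (nn i k hik) := by
  rintro x ⟨⟨hx, h1⟩, _, h2⟩
  refine ⟨hx, ?_⟩
  have a := hx.2.2 i j k hij hjk hik
  have b := hx.2.1 i k hik
  simp at *
  linarith

lemma rel3_transT {n : ℕ} {i j k : Fin n} (hij : i ≠ j) (hjk : j ≠ k) (hik : i ≠ k) :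
    rel3 (nn i j hij) (nn j k hjk) (tt i j k ⟨hij, hjk, hik⟩) := by
  rintro x hx
  have h3 := (rel3_trans hij hjk hik hx).2
  obtain ⟨⟨hx, h1⟩, _, h2⟩ := hx
  refine ⟨hx, ?_⟩
  simp at *
  linarith

lemma R_sigma {n : ℕ} {σ : Con n ≃ Con n}
    (h3 : ∀ c d e, rel3 c d e ↔ rel3 (σ c) (σ d) (σ e)) {c d : Con n} (h : R c d) :
    R (σ c) (σ d) := by
  obtain ⟨hne, s, hs, hs2⟩ := h
  refine ⟨fun e => hne (σ.injective e), s.map σ.toEmbedding, by simpa using hs, ?_⟩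
  intro e he
  simp only [Finset.mem_map, Equiv.coe_toEmbedding] at he
  obtain ⟨e, he, rfl⟩ := he
  exact (h3 _ _ _).1 (hs2 e he)

lemma sigma_N {n : ℕ} {σ : Con n ≃ Con n}
    (h3 : ∀ c d e, rel3 c d e ↔ rel3 (σ c) (σ d) (σ e)) {i j : Fin n} (h : i ≠ j) :
    ∃ p q hpq, σ (nn i j h) = nn p q hpq := by
  rcases con_cases (σ (nn i j h)) with h1 | ⟨p, q, r, g, e⟩
  · exact h1
  · exfalso
    have h3' : ∀ c d e, rel3 c d e ↔ rel3 (σ.symm c) (σ.symm d) (σ.symm e) := by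
      intro c d e
      rw [h3 (σ.symm c)]; simp
    obtain ⟨d, d', hne, hd, hd'⟩ := R_T g
    have a := R_sigma h3' hd
    have a' := R_sigma h3' hd'
    rw [← e, Equiv.symm_apply_apply] at a a'
    have b := R_N h _ a
    have b' := R_N h _ a'
    exact hne (σ.symm.injective (b.trans b'.symm))

lemma comb {n : ℕ} (hn : 3 ≤ n) (f : Fin n → Fin n → Fin n)
    (hne : ∀ i j, i ≠ j → f i j ≠ f j i)
    (hD : ∀ i j k, i ≠ j → j ≠ k → i ≠ k → f j i = f j k ∨ f i j = f k j) :
    ∃ π : Equiv.Perm (Fin n), (∀ i j, i ≠ j → f i j = π i) ∨ (∀ i j, i ≠ j → f i j = π j) := by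
  have row : ∀ j, (∃ p, ∀ i, i ≠ j → f j i = p) ∨ (∃ p, ∀ i, i ≠ j → f i j = p) := by
    intro j
    by_cases h : ∃ i k, i ≠ j ∧ k ≠ j ∧ f j i ≠ f j k
    · obtain ⟨i, k, hi, hk, hik⟩ := h
      right
      refine ⟨f i j, fun l hl => ?_⟩
      have h1 := hD i j k hi hk.symm (fun e => hik (by rw [e]))
      by_cases e1 : l = i
      · rw [e1]
      by_cases e2 : l = k
      · rw [e2]; exact (h1.resolve_left hik).symm
      have h2 := hD i j l hi hl.symm (Ne.symm e1)
      have h3 := hD k j l hk hl.symm (Ne.symm e2)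
      grind
    · push Not at h
      left
      by_cases h2 : ∃ i, i ≠ j
      · obtain ⟨i, hi⟩ := h2
        exact ⟨f j i, fun k hk => h k i hk hi⟩
      · push Not at h2
        exact ⟨j, fun i hi => absurd (h2 i) hi⟩
  have third : ∀ i j : Fin n, ∃ m, m ≠ i ∧ m ≠ j := by
    intro i j
    by_contra! hc
    have h1 : (Finset.univ : Finset (Fin n)) ⊆ {i, j} := fun x _ => by
      have := hc x
      simp only [Finset.mem_insert, Finset.mem_singleton]; tauto
    have h2 := Finset.card_le_card h1
    have h3 : ({i, j} : Finset (Fin n)).card ≤ 2 := Finset.card_le_two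
    simp at h2; omega
  have key : ∀ j j', j ≠ j' → ∀ p q, (∀ i, i ≠ j → f j i = p) → (∀ i, i ≠ j' → f i j' = q) →
      False := by
    intro j j' hjj p q hp hq
    obtain ⟨k, hk, hk'⟩ := third j j'
    rcases row k with ⟨r, hr⟩ | ⟨r, hr⟩
    · have := hne j k hk.symm
      have := hp j' hjj.symm
      have := hq j hjj
      have := hp k hk
      have := hr j hk.symm
      have := hr j' hk'.symm
      have := hq k hk'
      grind
    · have := hne j' k hk'.symm
      have := hp j' hjj.symm
      have := hq j hjj
      have := hp k hk
      have := hr j hk.symm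
      have := hr j' hk'.symm
      have := hq k hk'
      grind
  have mk : ∀ π : Fin n → Fin n, (∀ i j, i ≠ j → π i ≠ π j) →
      ∃ ρ : Equiv.Perm (Fin n), ∀ i, ρ i = π i := by
    intro π hπ
    have hinj : Function.Injective π := fun i j e => by
      by_contra hij; exact hπ i j hij e
    exact ⟨Equiv.ofBijective π (Finite.injective_iff_bijective.1 hinj), fun i => rfl⟩
  by_cases hall : ∀ j, ∃ p, ∀ i, i ≠ j → f j i = p
  · choose π hπ using hall
    obtain ⟨ρ, hρ⟩ := mk π (fun i j hij => by
      rw [← hπ i j hij.symm, ← hπ j i hij]; exact hne i j hij)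
    exact ⟨ρ, Or.inl fun i j hij => by rw [hρ]; exact hπ i j hij.symm⟩
  · have hall2 : ∀ j, ∃ p, ∀ i, i ≠ j → f i j = p := by
      push Not at hall
      obtain ⟨j0, hj0⟩ := hall
      have hc0 : ∃ p, ∀ i, i ≠ j0 → f i j0 = p := by
        rcases row j0 with ⟨p, hp⟩ | h
        · obtain ⟨i, hi, hi2⟩ := hj0 p
          exact absurd (hp i hi) hi2
        · exact h
      intro j
      rcases row j with ⟨p, hp⟩ | h
      · by_cases e : j = j0
        · rw [e]; exact hc0
        · obtain ⟨q, hq⟩ := hc0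
          exact (key j j0 e p q hp hq).elim
      · exact h
    choose π hπ using hall2
    obtain ⟨ρ, hρ⟩ := mk π (fun i j hij => by
      rw [← hπ i j hij.symm, ← hπ j i hij]; exact (hne i j hij).symm)
    exact ⟨ρ, Or.inr fun i j hij => by rw [hρ]; exact hπ j i hij⟩

lemma sigma_T {n : ℕ} {σ : Con n ≃ Con n}
    (h3 : ∀ c d e, rel3 c d e ↔ rel3 (σ c) (σ d) (σ e))
    (c : Con n) (hc : ∀ i j h, c ≠ nn i j h) : ∃ p q r g, σ c = tt p q r g := by
  rcases con_cases (σ c) with ⟨p, q, g, e⟩ | h1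
  · exfalso
    have h3' : ∀ c d e, rel3 c d e ↔ rel3 (σ.symm c) (σ.symm d) (σ.symm e) := by
      intro c d e
      rw [h3 (σ.symm c)]; simp
    obtain ⟨a, b, hab, h⟩ := sigma_N h3' g
    rw [← e, Equiv.symm_apply_apply] at h
    exact hc _ _ _ h
  · exact h1

lemma final {n : ℕ} {Φ : Face n ≃ Face n}
    (hmono : ∀ F G : Face n, (F : Set (Mt n)) ⊆ G ↔ (Φ F : Set (Mt n)) ⊆ Φ G)
    {σ : Con n ≃ Con n} (hσ : ∀ c, Φ (fc c) = fc (σ c)) (ψ φ : Mt n → Mt n)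
    (hψφ : ∀ A, ψ (φ A) = A) (hdiag : ∀ A, (∀ i, ψ A i i = 0) ↔ ∀ i, A i i = 0)
    (hev : ∀ c A, ev (σ c).1 (ψ A) = ev c.1 A) (F : Face n) :
    (Φ F : Set (Mt n)) = ψ '' F := by
  have hQ : ∀ A, ψ A ∈ QSM n ↔ A ∈ QSM n := by
    intro A
    rw [mem_QSM, mem_QSM, hdiag]
    refine and_congr_right fun _ => ⟨fun h c => ?_, fun h c => ?_⟩
    · rw [← hev]; exact h _
    · have := h (σ.symm c)
      rwa [← hev, Equiv.apply_symm_apply] at this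
  have hF : ∀ c A, ψ A ∈ Fc (σ c) ↔ A ∈ Fc c := by
    intro c A
    show (ψ A ∈ QSM n ∧ _ = _) ↔ (A ∈ QSM n ∧ _ = _)
    rw [hQ, hev]
  have hsub : ∀ c, (F : Set (Mt n)) ⊆ Fc c ↔ (Φ F : Set (Mt n)) ⊆ Fc (σ c) := by
    intro c
    have := hmono F (fc c)
    rw [hσ] at this
    exact this
  have main : ∀ A, ψ A ∈ (Φ F : Set (Mt n)) ↔ A ∈ (F : Set (Mt n)) := by
    intro A
    rw [face_repr (Φ F).2, face_repr F.2, hQ]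
    refine and_congr_right fun _ => ⟨fun h c hc => ?_, fun h c hc => ?_⟩
    · rw [← hF]; exact h _ ((hsub c).1 hc)
    · have := h (σ.symm c) (by rw [hsub]; simpa using hc)
      rwa [← hF, Equiv.apply_symm_apply] at this
  ext B
  constructor
  · intro hB
    refine ⟨φ B, ?_, hψφ B⟩
    rw [← main, hψφ]; exact hB
  · rintro ⟨A, hA, rfl⟩
    exact (main A).2 hA

end QS

open QS

/-- The combinatorial symmetry group of `Ê_n` is `Sₙ × ℤ₂`. -/
theorem stmt0 (n : ℕ) (hn : 3 ≤ n)
    (Φ : {F : Set (Fin n → Fin n → ℝ) // IsFace n F} ≃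
         {F : Set (Fin n → Fin n → ℝ) // IsFace n F})
    (hmono : ∀ F G : {F : Set (Fin n → Fin n → ℝ) // IsFace n F},
      (F : Set (Fin n → Fin n → ℝ)) ⊆ G ↔ (Φ F : Set (Fin n → Fin n → ℝ)) ⊆ Φ G) :
    ∃ π : Equiv.Perm (Fin n),
      (∀ F : {F : Set (Fin n → Fin n → ℝ) // IsFace n F},
        (Φ F : Set (Fin n → Fin n → ℝ)) =
          (fun A : Fin n → Fin n → ℝ => fun i j => A (π.symm i) (π.symm j)) ''
            (F : Set (Fin n → Fin n → ℝ))) ∨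
      (∀ F : {F : Set (Fin n → Fin n → ℝ) // IsFace n F},
        (Φ F : Set (Fin n → Fin n → ℝ)) =
          (fun A : Fin n → Fin n → ℝ => fun i j => A (π.symm j) (π.symm i)) ''
            (F : Set (Fin n → Fin n → ℝ))) := by
  classical
  obtain ⟨σ, hσ⟩ := exists_sigma Φ hmono
  have h3 := rel3_sigma hmono hσ
  have hN : ∀ i j : Fin n, ∃ p q : Fin n, ∀ h : i ≠ j, ∃ hpq, σ (nn i j h) = nn p q hpq := by
    intro i j
    by_cases h : i = j
    · exact ⟨i, j, fun h' => absurd h h'⟩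
    · obtain ⟨p, q, hpq, e⟩ := sigma_N h3 h
      exact ⟨p, q, fun _ => ⟨hpq, e⟩⟩
  choose f g hfg using hN
  have hrev : ∀ i j, i ≠ j → g i j = f j i := by
    intro i j h
    obtain ⟨a, ha⟩ := hfg i j h
    obtain ⟨b, hb⟩ := hfg j i h.symm
    have := R_sigma h3 (R_NN hn h)
    rw [ha] at this
    have := R_N a _ this
    rw [hb, nn_inj] at this
    exact this.1.symm
  have hne : ∀ i j, i ≠ j → f i j ≠ f j i := by
    intro i j h
    obtain ⟨a, ha⟩ := hfg i j h
    rwa [hrev i j h] at a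
  have hN : ∀ i j, ∀ h : i ≠ j, σ (nn i j h) = nn (f i j) (f j i) (hne i j h) := by
    intro i j h
    obtain ⟨a, ha⟩ := hfg i j h
    rw [ha, nn_inj]; exact ⟨rfl, hrev i j h⟩
  have hD : ∀ i j k, i ≠ j → j ≠ k → i ≠ k → f j i = f j k ∨ f i j = f k j := by
    intro i j k hij hjk hik
    by_contra! hc
    have h1 := (h3 _ _ _).1 (rel3_trans hij hjk hik)
    rw [hN, hN, hN] at h1
    rcases cut_NN' _ _ hc.1 hc.2 _ _ _ h1 with h2 | h2
    · have : σ (nn i k hik) = σ (nn i j hij) := by rw [hN, hN, nn_inj]; exact h2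
      have := σ.injective this
      rw [nn_inj] at this
      exact hjk this.2.symm
    · have : σ (nn i k hik) = σ (nn j k hjk) := by rw [hN, hN, nn_inj]; exact h2
      have := σ.injective this
      rw [nn_inj] at this
      exact hij this.1
  obtain ⟨π, hπ | hπ⟩ := comb hn f hne hD
  · refine ⟨π, Or.inl (final hmono hσ _ (fun A i j => A (π i) (π j)) ?_ ?_ ?_)⟩
    · intro A; simp
    · intro A
      exact ⟨fun h i => by simpa using h (π i), fun h i => h _⟩
    · intro c A
      rcases con_cases c with ⟨i, j, h, rfl⟩ | ⟨i, j, k, h, rfl⟩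
      · rw [hN]; simp [hπ i j h, hπ j i h.symm]
      · obtain ⟨p, q, r, u, e⟩ := sigma_T h3 (tt i j k h) (by simp)
        have h1 := (h3 _ _ _).1 (rel3_transT h.1 h.2.1 h.2.2)
        rw [e] at h1
        simp only [hN, hπ i j h.1, hπ j i h.1.symm, hπ j k h.2.1, hπ k j h.2.1.symm] at h1
        obtain ⟨rfl, rfl, rfl⟩ := consec_T _ _ (fun e => h.2.2 (π.injective e)) _ h1
        rw [e]; simp
  · refine ⟨π, Or.inr (final hmono hσ _ (fun A i j => A (π j) (π i)) ?_ ?_ ?_)⟩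
    · intro A; simp
    · intro A
      exact ⟨fun h i => by simpa using h (π i), fun h i => h _⟩
    · intro c A
      rcases con_cases c with ⟨i, j, h, rfl⟩ | ⟨i, j, k, h, rfl⟩
      · rw [hN]; simp [hπ i j h, hπ j i h.symm]
      · obtain ⟨p, q, r, u, e⟩ := sigma_T h3 (tt i j k h) (by simp)
        have h1 := (h3 _ _ _).1 (rel3_transT h.1 h.2.1 h.2.2)
        rw [e] at h1
        simp only [hN, hπ i j h.1, hπ j i h.1.symm, hπ j k h.2.1, hπ k j h.2.1.symm] at h1
        obtain ⟨rfl, rfl, rfl⟩ := consec_T _ _ (fun e => h.2.2 (π.injective e).symm) _ (rel3_swap h1)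
        rw [e]; simp; ring
end

section
/- Let n ≥ 3 and let E_n be the set of matrices A : Fin n → Fin n → ℤ with A i i = 0 for all i, A i j ≥ 0 for all i ≠ j, and A i j + A j k ≥ A i k for all pairwise distinct i, j, k. For A, B ∈ E_n let A ⊕ B denote the entrywise maximum. If φ : E_n → E_n is a bijection satisfying φ(A ⊕ B) = φ(A) ⊕ φ(B) for all A, B ∈ E_n, then there exists a permutation π of Fin n such that either φ(A)_{π(i)π(j)} = A_{ij} for all A ∈ E_n and all i ≠ j, or φ(A)_{π(i)π(j)} = A_{ji} for all A ∈ E_n and all i ≠ j. (The automorphism group of the monoid (E_n, ⊕) is S_n × ℤ₂.) -/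
/-- The monoid `E_n` of integer quasi-semimetrics (exponent matrices) on `n` points. -/
def EZ (n : ℕ) : Set (Fin n → Fin n → ℤ) :=
  {A | (∀ i, A i i = 0) ∧ (∀ i j : Fin n, i ≠ j → 0 ≤ A i j) ∧
    (∀ i j k : Fin n, i ≠ j → j ≠ k → i ≠ k → A i k ≤ A i j + A j k)}

noncomputable section

namespace EZaux

variable {n : ℕ}

theorem nonneg (A : EZ n) (i j : Fin n) : 0 ≤ A.1 i j := by
  by_cases h : i = j
  · subst h; exact (A.2.1 i).ge
  · exact A.2.2.1 i j h

theorem diag (A : EZ n) (i : Fin n) : A.1 i i = 0 := A.2.1 i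

theorem tri (A : EZ n) (i j k : Fin n) : A.1 i k ≤ A.1 i j + A.1 j k := by
  by_cases h1 : i = j
  · subst h1; simp [diag]
  by_cases h2 : j = k
  · subst h2; simp [diag]
  by_cases h3 : i = k
  · subst h3
    have := nonneg A i j
    have := nonneg A j i
    rw [diag]; omega
  exact A.2.2.2 i j k h1 h2 h3

theorem mk_mem {A : Fin n → Fin n → ℤ} (h1 : ∀ i, A i i = 0) (h2 : ∀ i j, 0 ≤ A i j)
    (h3 : ∀ i j k, A i k ≤ A i j + A j k) : A ∈ EZ n :=
  ⟨h1, fun i j _ => h2 i j, fun i j k _ _ _ => h3 i j k⟩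

theorem sup_mem {A B : Fin n → Fin n → ℤ} (hA : A ∈ EZ n) (hB : B ∈ EZ n) : A ⊔ B ∈ EZ n := by
  refine mk_mem ?_ ?_ ?_
  · intro i
    have := diag ⟨A, hA⟩ i
    have := diag ⟨B, hB⟩ i
    simp_all
  · intro i j
    exact le_sup_of_le_left (nonneg ⟨A, hA⟩ i j)
  · intro i j k
    have h1 : A i k ≤ A i j + A j k := tri ⟨A, hA⟩ i j k
    have h2 : B i k ≤ B i j + B j k := tri ⟨B, hB⟩ i j k
    simp only [Pi.sup_apply]
    omega

instance : SemilatticeSup (EZ n) := Subtype.semilatticeSup (fun _ _ hA hB => sup_mem hA hB)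

theorem sup_app (A B : EZ n) (i j : Fin n) : (A ⊔ B).1 i j = max (A.1 i j) (B.1 i j) := rfl

theorem le_iff (A B : EZ n) : A ≤ B ↔ ∀ i j, A.1 i j ≤ B.1 i j := Iff.rfl

theorem ext' {A B : EZ n} (h : ∀ i j, A.1 i j = B.1 i j) : A = B :=
  Subtype.ext (funext fun i => funext fun j => h i j)

/-- potential matrices -/
def D (f : Fin n → ℤ) : EZ n :=
  ⟨fun i j => max (f i - f j) 0, mk_mem (by simp) (by simp) (by intro i j k; omega)⟩

theorem D_app (f : Fin n → ℤ) (i j : Fin n) : (D f).1 i j = max (f i - f j) 0 := rfl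

open Classical in
/-- multiples of cuts -/
def cut (c : ℕ) (S : Set (Fin n)) : EZ n :=
  D (fun i => if i ∈ S then (c : ℤ) else 0)

theorem cut_app_in (c : ℕ) (S : Set (Fin n)) {i j : Fin n} (hi : i ∈ S) (hj : j ∉ S) :
    (cut c S).1 i j = c := by
  simp [cut, D_app, hi, hj]

theorem cut_app_out (c : ℕ) (S : Set (Fin n)) {i j : Fin n} (h : ¬ (i ∈ S ∧ j ∉ S)) :
    (cut c S).1 i j = 0 := by
  by_cases hi : i ∈ S <;> by_cases hj : j ∈ S <;> simp_all [cut, D_app]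

theorem cut_le (c : ℕ) (S : Set (Fin n)) (A : EZ n) :
    cut c S ≤ A ↔ ∀ i ∈ S, ∀ j ∉ S, (c : ℤ) ≤ A.1 i j := by
  rw [le_iff]
  constructor
  · intro h i hi j hj
    rw [← cut_app_in c S hi hj]; exact h i j
  · intro h i j
    by_cases hij : i ∈ S ∧ j ∉ S
    · rw [cut_app_in c S hij.1 hij.2]; exact h i hij.1 j hij.2
    · rw [cut_app_out c S hij]; exact nonneg A i j

theorem cut_le_D (S : Set (Fin n)) (f : Fin n → ℤ) :
    cut 1 S ≤ D f ↔ ∀ i ∈ S, ∀ j ∉ S, f j < f i := by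
  rw [cut_le]
  refine forall_congr' fun i => forall_congr' fun _ => forall_congr' fun j => forall_congr' fun _ => ?_
  rw [D_app]; push_cast; omega

/-- proper nonempty sets -/
def Pr (S : Set (Fin n)) : Prop := (∃ i, i ∈ S) ∧ ∃ j, j ∉ S

theorem cut_le_cut {c : ℕ} (hc : 0 < c) {S T : Set (Fin n)} (hS : Pr S) (h : cut 1 S ≤ cut c T) :
    S = T := by
  rw [cut_le] at h
  have key : ∀ i ∈ S, ∀ j ∉ S, i ∈ T ∧ j ∉ T := by
    intro i hi j hj
    by_contra hh
    have := h i hi j hj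
    rw [cut_app_out _ _ hh] at this
    norm_num at this
  obtain ⟨⟨a, ha⟩, b, hb⟩ := hS
  ext x
  by_cases hx : x ∈ S
  · exact ⟨fun _ => (key x hx b hb).1, fun _ => hx⟩
  · exact ⟨fun h => absurd h hx, fun h => absurd h (key a ha x hx).2⟩

theorem cut_inj {S T : Set (Fin n)} (hS : Pr S) (h : cut 1 S = cut 1 T) : S = T :=
  cut_le_cut one_pos hS h.le

/-- atoms -/
def At (A : EZ n) : Prop := (∃ B, ¬ A ≤ B) ∧ ∀ B, B ≤ A → (A ≤ B) ∨ ∀ C, B ≤ C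

theorem bot_iff (A : EZ n) : (∀ C, A ≤ C) ↔ ∀ i j, A.1 i j = 0 := by
  constructor
  · intro h i j
    have := h (D fun _ => 0) i j
    rw [D_app] at this
    have := nonneg A i j
    simp at *; omega
  · intro h C i j
    rw [h]; exact nonneg C i j

theorem exists_cut (A : EZ n) (h : ¬ ∀ C, A ≤ C) : ∃ S, Pr S ∧ cut 1 S ≤ A := by
  rw [bot_iff] at h
  push Not at h
  obtain ⟨i, j, hij⟩ := h
  refine ⟨{x | 0 < A.1 x j}, ⟨⟨i, ?_⟩, j, ?_⟩, ?_⟩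
  · exact lt_of_le_of_ne (nonneg A i j) (Ne.symm hij)
  · simp [diag]
  · rw [cut_le]
    intro x hx y hy
    have := tri A x y j
    simp at hx hy
    push_cast; omega

theorem at_iff (A : EZ n) : At A ↔ ∃ S, Pr S ∧ A = cut 1 S := by
  constructor
  · rintro ⟨⟨B, hB⟩, h⟩
    obtain ⟨S, hS, hSA⟩ := exists_cut A (fun h => hB (h B))
    refine ⟨S, hS, ?_⟩
    rcases h _ hSA with h1 | h1
    · exact le_antisymm h1 hSA
    · rw [bot_iff] at h1
      obtain ⟨⟨a, ha⟩, b, hb⟩ := hS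
      have := h1 a b
      rw [cut_app_in _ _ ha hb] at this
      norm_num at this
  · rintro ⟨S, hS, rfl⟩
    obtain ⟨⟨a, ha⟩, b, hb⟩ := id hS
    refine ⟨⟨D fun _ => 0, ?_⟩, ?_⟩
    · intro h
      have := h a b
      rw [cut_app_in _ _ ha hb] at this
      simp [D_app] at this
    · intro B hB
      by_cases h0 : ∀ C, B ≤ C
      · exact Or.inr h0
      · left
        obtain ⟨T, hT, hTB⟩ := exists_cut B h0
        rw [← cut_le_cut one_pos hT (hTB.trans hB)]
        exact hTB

theorem at_map (φ : EZ n ≃o EZ n) {A : EZ n} (h : At A) : At (φ A) := by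
  obtain ⟨⟨B, hB⟩, h⟩ := h
  refine ⟨⟨φ B, by simpa using hB⟩, ?_⟩
  intro C hC
  rcases h (φ.symm C) (by rw [φ.symm_apply_le]; exact hC) with h | h
  · left; rw [φ.le_symm_apply] at h; exact h
  · right; intro E
    have := h (φ.symm E)
    simpa using this

theorem cut_map (φ : EZ n ≃o EZ n) {S : Set (Fin n)} (h : Pr S) :
    ∃ T, Pr T ∧ φ (cut 1 S) = cut 1 T :=
  (at_iff _).1 (at_map φ ((at_iff _).2 ⟨S, h, rfl⟩))

/-- join irreducible (bottom allowed) -/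
def JI (A : EZ n) : Prop := ∀ B C, A = B ⊔ C → A = B ∨ A = C

theorem JI_map (φ : EZ n ≃o EZ n) {A : EZ n} (h : JI A) : JI (φ A) := by
  intro B C hBC
  have : A = φ.symm B ⊔ φ.symm C := by
    rw [← φ.symm.map_sup, ← hBC]; simp
  rcases h _ _ this with h | h
  · left; rw [h]; simp
  · right; rw [h]; simp

theorem D_JI_aux (f : Fin n → ℤ) (a b : Fin n) (ha : ∀ x, f x ≤ f a) (hb : ∀ x, f b ≤ f x)
    (B : EZ n) (hB : B ≤ D f) (h : (D f).1 a b = B.1 a b) : D f = B := by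
  refine le_antisymm ?_ hB
  intro x y
  have h1 := hB a x
  have h2 := hB y b
  have h3 := tri B a x b
  have h4 := tri B x y b
  have h5 := nonneg B x y
  have := ha x
  have := hb y
  have := ha b
  show max (f x - f y) 0 ≤ B.1 x y
  change B.1 a x ≤ max (f a - f x) 0 at h1
  change B.1 y b ≤ max (f y - f b) 0 at h2
  change max (f a - f b) 0 = B.1 a b at h
  omega

theorem D_JI (f : Fin n → ℤ) : JI (D f) := by
  intro B C h
  rcases isEmpty_or_nonempty (Fin n) with hn | hn
  · left; exact ext' fun i => (hn.false i).elim
  obtain ⟨a, ha⟩ := Finite.exists_max f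
  obtain ⟨b, hb⟩ := Finite.exists_min f
  have hab : (D f).1 a b = max (B.1 a b) (C.1 a b) := by rw [← sup_app, ← h]
  have hB : B ≤ D f := by rw [h]; exact le_sup_left
  have hC : C ≤ D f := by rw [h]; exact le_sup_right
  rcases max_choice (B.1 a b) (C.1 a b) with h1 | h1
  · left; exact D_JI_aux f a b ha hb B hB (hab.trans h1)
  · right; exact D_JI_aux f a b ha hb C hC (hab.trans h1)

theorem D_col_le (A : EZ n) (k : Fin n) : D (fun i => A.1 i k) ≤ A := by
  intro i j
  have := tri A i j k
  have := nonneg A i j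
  show max (A.1 i k - A.1 j k) 0 ≤ A.1 i j
  omega

theorem D_col_app (A : EZ n) (i k : Fin n) : (D (fun i => A.1 i k)).1 i k = A.1 i k := by
  have := diag A k
  have := nonneg A i k
  rw [D_app]; omega

theorem JI_D (hn : 0 < n) (A : EZ n) (h : JI A) : ∃ f, A = D f := by
  by_contra hcon
  push Not at hcon
  have key : ∀ s : Finset (Fin n), ∃ B : EZ n, B ≤ A ∧ B ≠ A ∧
      ∀ k ∈ s, D (fun i => A.1 i k) ≤ B := by
    intro s
    induction s using Finset.induction_on with
    | empty => exact ⟨D (fun i => A.1 i ⟨0, hn⟩), D_col_le _ _, (hcon _).symm, by simp⟩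
    | insert a s _ ih =>
      obtain ⟨B, h1, h2, h3⟩ := ih
      refine ⟨B ⊔ D (fun i => A.1 i a), sup_le h1 (D_col_le _ _), ?_, ?_⟩
      · intro h4
        rcases h _ _ h4.symm with h5 | h5
        · exact h2 h5.symm
        · exact hcon _ h5
      · intro k hk
        rcases Finset.mem_insert.1 hk with rfl | hk
        · exact le_sup_right
        · exact (h3 k hk).trans le_sup_left
  obtain ⟨B, h1, h2, h3⟩ := key Finset.univ
  refine h2 (le_antisymm h1 ?_)
  intro i k
  rw [← D_col_app]
  exact h3 k (Finset.mem_univ k) i k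

theorem D_map (hn : 0 < n) (φ : EZ n ≃o EZ n) (f : Fin n → ℤ) : ∃ g, φ (D f) = D g :=
  JI_D hn _ (JI_map φ (D_JI f))

/-! automorphisms fixing the cuts -/

theorem single_cut (g : Fin n → ℤ) (S : Set (Fin n)) (hS : Pr S) (h : cut 1 S ≤ D g)
    (hu : ∀ T, Pr T → cut 1 T ≤ D g → T = S) : ∃ c : ℕ, D g = cut c S := by
  obtain ⟨⟨a, ha⟩, b, hb⟩ := hS
  rw [cut_le_D] at h
  have key : ∀ x y, g x < g y → {z | g x < g z} = S := by
    intro x y hxy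
    refine hu _ ⟨⟨y, hxy⟩, x, by simp⟩ ?_
    rw [cut_le_D]
    intro i hi j hj
    simp at hi hj
    omega
  have h1 : ∀ x y, g x < g y → y ∈ S ∧ x ∉ S := by
    intro x y hxy
    have := key x y hxy
    constructor
    · rw [← this]; exact hxy
    · rw [← this]; simp
  have hin : ∀ x ∈ S, g x = g a := by
    intro x hx
    rcases lt_trichotomy (g x) (g a) with h2 | h2 | h2
    · exact absurd hx (h1 _ _ h2).2
    · exact h2
    · exact absurd ha (h1 _ _ h2).2
  have hout : ∀ x ∉ S, g x = g b := by
    intro x hx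
    rcases lt_trichotomy (g x) (g b) with h2 | h2 | h2
    · exact absurd (h1 _ _ h2).1 hb
    · exact h2
    · exact absurd (h1 _ _ h2).1 hx
  have hab := h a ha b hb
  refine ⟨(g a - g b).toNat, ext' fun i j => ?_⟩
  by_cases hi : i ∈ S <;> by_cases hj : j ∈ S
  · rw [cut_app_out _ _ (by tauto), D_app, hin i hi, hin j hj]; simp
  · rw [cut_app_in _ _ hi hj, D_app, hin i hi, hout j hj]; omega
  · rw [cut_app_out _ _ (by tauto), D_app, hout i hi, hin j hj]; omega
  · rw [cut_app_out _ _ (by tauto), D_app, hout i hi, hout j hj]; simp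

theorem cut_mono {S : Set (Fin n)} (hS : Pr S) (c d : ℕ) : cut c S ≤ cut d S ↔ c ≤ d := by
  obtain ⟨⟨a, ha⟩, b, hb⟩ := hS
  rw [cut_le]
  constructor
  · intro h
    have := h a ha b hb
    rw [cut_app_in _ _ ha hb] at this
    exact_mod_cast this
  · intro h i hi j hj
    rw [cut_app_in _ _ hi hj]
    exact_mod_cast h

theorem cut_zero (S : Set (Fin n)) (C : EZ n) : cut 0 S ≤ C := by
  rw [cut_le]; intro i _ j _; exact_mod_cast nonneg C i j

theorem fix_mult_aux (hn : 0 < n) (φ : EZ n ≃o EZ n) (hφ : ∀ S, Pr S → φ (cut 1 S) = cut 1 S)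
    {S : Set (Fin n)} (hS : Pr S) : ∃ h : ℕ → ℕ, StrictMono h ∧ ∀ c, φ (cut c S) = cut (h c) S := by
  have : ∀ c, ∃ d, φ (cut c S) = cut d S := by
    intro c
    rcases Nat.eq_zero_or_pos c with rfl | hc
    · refine ⟨0, le_antisymm ?_ (cut_zero _ _)⟩
      rw [← φ.le_symm_apply]; exact cut_zero _ _
    · obtain ⟨g, hg⟩ := D_map hn φ _
      obtain ⟨d, hd⟩ := single_cut g S hS
        (by rw [← hg, ← hφ S hS, φ.le_iff_le]; exact (cut_mono hS 1 c).2 hc)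
        (by
          intro T hT hTg
          rw [← hg, ← hφ T hT, φ.le_iff_le] at hTg
          exact cut_le_cut hc hT hTg)
      exact ⟨d, hg.trans hd⟩
  choose h hh using this
  refine ⟨h, ?_, hh⟩
  intro c d hcd
  rw [← not_le, ← cut_mono hS, ← hh, ← hh, φ.le_iff_le, cut_mono hS]
  omega

theorem fix_mult (hn : 0 < n) (φ : EZ n ≃o EZ n) (hφ : ∀ S, Pr S → φ (cut 1 S) = cut 1 S)
    {S : Set (Fin n)} (hS : Pr S) (c : ℕ) : φ (cut c S) = cut c S := by
  obtain ⟨h, h1, h2⟩ := fix_mult_aux hn φ hφ hS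
  obtain ⟨k, k1, k2⟩ := fix_mult_aux hn φ.symm
    (fun S hS => by rw [φ.symm_apply_eq]; exact (hφ S hS).symm) hS
  have e1 : c ≤ h c := h1.le_apply
  have e2 : h c ≤ k (h c) := k1.le_apply
  have e3 : cut c S = cut (k (h c)) S := by rw [← k2, ← h2]; simp
  have e4 : k (h c) ≤ c := (cut_mono hS _ _).1 e3.ge
  rw [h2]; congr 1; omega

theorem D_le_of_cuts (f g : Fin n → ℤ)
    (h : ∀ (c : ℕ) (S : Set (Fin n)), Pr S → cut c S ≤ D f → cut c S ≤ D g) : D f ≤ D g := by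
  have key : ∀ m : ℕ, ∀ i j, f j < f i → (f i - f j).toNat ≤ m → f i - f j ≤ g i - g j := by
    intro m
    induction m with
    | zero => intro i j h1 h2; omega
    | succ m ih =>
      intro i j h1 h2
      obtain ⟨x, hx, hmin⟩ := Set.exists_min_image {x | f j < f x} f (Set.toFinite _) ⟨i, h1⟩
      simp only [Set.mem_ofPred_eq] at hx hmin
      have hc := h (f x - f j).toNat {x | f j < f x} ⟨⟨i, h1⟩, j, by simp⟩ (by
        rw [cut_le]
        intro y hy z hz
        simp at hy hz
        have := hmin y hy
        rw [D_app]; omega)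
      rw [cut_le] at hc
      rcases (hmin i h1).eq_or_lt with h3 | h3
      · have := hc i h1 j (by simp)
        rw [D_app] at this; omega
      · have := hc x hx j (by simp)
        have := ih i x h3 (by omega)
        rw [D_app] at *; omega
  intro i j
  show max (f i - f j) 0 ≤ max (g i - g j) 0
  by_cases hij : f j < f i
  · have := key _ i j hij le_rfl
    omega
  · omega

theorem fix_all (hn : 0 < n) (φ : EZ n ≃o EZ n) (hφ : ∀ S, Pr S → φ (cut 1 S) = cut 1 S)
    (A : EZ n) : φ A = A := by
  have hc : ∀ (c : ℕ) (S : Set (Fin n)), Pr S → ∀ A, (cut c S ≤ φ A ↔ cut c S ≤ A) := by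
    intro c S hS A
    conv_lhs => rw [← fix_mult hn φ hφ hS c]
    exact φ.le_iff_le
  have hD : ∀ f, φ (D f) = D f := by
    intro f
    obtain ⟨g, hg⟩ := D_map hn φ f
    rw [hg]
    apply le_antisymm
    · apply D_le_of_cuts
      intro c S hS h
      rw [← hg, hc c S hS] at h; exact h
    · apply D_le_of_cuts
      intro c S hS h
      rw [← hg, hc c S hS]; exact h
  have hle : ∀ A B : EZ n, (∀ f, D f ≤ A → D f ≤ B) → A ≤ B := by
    intro A B h i j
    rw [← D_col_app]
    exact h _ (D_col_le A j) i j
  have hD' : ∀ f, D f ≤ φ A ↔ D f ≤ A := by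
    intro f
    conv_lhs => rw [← hD f]
    exact φ.le_iff_le
  exact le_antisymm (hle _ _ fun f => (hD' f).1) (hle _ _ fun f => (hD' f).2)

/-! the action on cuts -/

theorem comp_iff (S T : Set (Fin n)) :
    (S ⊆ T ∨ T ⊆ S) ↔ ∃ f, cut 1 S ≤ D f ∧ cut 1 T ≤ D f := by
  classical
  constructor
  · intro h
    refine ⟨fun i => (if i ∈ S then 1 else 0) + (if i ∈ T then 1 else 0), ?_, ?_⟩
    · rw [cut_le_D]
      intro i hi j hj
      rcases h with h | h
      · have := h hi
        by_cases hjT : j ∈ T <;> simp [*]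
      · have : j ∉ T := fun hh => hj (h hh)
        by_cases hiT : i ∈ T <;> simp [*]
    · rw [cut_le_D]
      intro i hi j hj
      rcases h with h | h
      · have : j ∉ S := fun hh => hj (h hh)
        by_cases hiT : i ∈ S <;> simp [*]
      · have := h hi
        by_cases hjT : j ∈ S <;> simp [*]
  · rintro ⟨f, h1, h2⟩
    rw [cut_le_D] at h1 h2
    by_contra hcon
    push Not at hcon
    obtain ⟨a, ha, ha'⟩ := Set.not_subset.1 hcon.1
    obtain ⟨b, hb, hb'⟩ := Set.not_subset.1 hcon.2
    have := h1 a ha b hb'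
    have := h2 b hb a ha'
    omega

theorem comp_map (hn : 0 < n) (φ : EZ n ≃o EZ n) {S T S' T' : Set (Fin n)}
    (hS : φ (cut 1 S) = cut 1 S') (hT : φ (cut 1 T) = cut 1 T') (h : S ⊆ T ∨ T ⊆ S) :
    S' ⊆ T' ∨ T' ⊆ S' := by
  rw [comp_iff] at h ⊢
  obtain ⟨f, h1, h2⟩ := h
  obtain ⟨g, hg⟩ := D_map hn φ f
  refine ⟨g, ?_, ?_⟩
  · rw [← hg, ← hS, φ.le_iff_le]; exact h1
  · rw [← hg, ← hT, φ.le_iff_le]; exact h2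

theorem comp_map_iff (hn : 0 < n) (φ : EZ n ≃o EZ n) {S T S' T' : Set (Fin n)}
    (hS : φ (cut 1 S) = cut 1 S') (hT : φ (cut 1 T) = cut 1 T') :
    (S ⊆ T ∨ T ⊆ S) ↔ (S' ⊆ T' ∨ T' ⊆ S') :=
  ⟨comp_map hn φ hS hT, comp_map hn φ.symm (by rw [← hS]; simp) (by rw [← hT]; simp)⟩

/-- middle sets -/
def Mid (S : Set (Fin n)) : Prop := ∃ B C E, Pr B ∧ Pr C ∧ Pr E ∧ C ≠ S ∧ C ≠ B ∧ E ≠ S ∧ E ≠ B ∧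
  C ≠ E ∧ cut 1 C ≤ cut 1 S ⊔ cut 1 B ∧ cut 1 E ≤ cut 1 S ⊔ cut 1 B

theorem Mid_map (φ : EZ n ≃o EZ n) {S S' : Set (Fin n)}
    (hS : φ (cut 1 S) = cut 1 S') (h : Mid S) : Mid S' := by
  obtain ⟨B, C, E, hB, hC, hE, h1, h2, h3, h4, h5, h6, h7⟩ := h
  obtain ⟨B', hB', eB⟩ := cut_map φ hB
  obtain ⟨C', hC', eC⟩ := cut_map φ hC
  obtain ⟨E', hE', eE⟩ := cut_map φ hE
  have inj : ∀ {X Y X' Y' : Set (Fin n)}, Pr X → φ (cut 1 X) = cut 1 X' → φ (cut 1 Y) = cut 1 Y' →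
      X ≠ Y → X' ≠ Y' := by
    intro X Y X' Y' hX e1 e2 hne he
    subst he
    exact hne (cut_inj hX (φ.injective (e1.trans e2.symm)))
  refine ⟨B', C', E', hB', hC', hE', inj hC eC hS h1, inj hC eC eB h2, inj hE eE hS h3,
    inj hE eE eB h4, inj hC eC eE h5, ?_, ?_⟩
  · rw [← eC, ← hS, ← eB, ← φ.map_sup, φ.le_iff_le]; exact h6
  · rw [← eE, ← hS, ← eB, ← φ.map_sup, φ.le_iff_le]; exact h7

theorem cut_le_sup (C S B : Set (Fin n)) : cut 1 C ≤ cut 1 S ⊔ cut 1 B ↔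
    ∀ x ∈ C, ∀ y ∉ C, (x ∈ S ∧ y ∉ S) ∨ (x ∈ B ∧ y ∉ B) := by
  rw [cut_le]
  refine forall_congr' fun x => forall_congr' fun _ => forall_congr' fun y => forall_congr' fun _ => ?_
  rw [sup_app]
  by_cases h1 : x ∈ S ∧ y ∉ S
  · rw [cut_app_in _ _ h1.1 h1.2]; simp [h1]
  · by_cases h2 : x ∈ B ∧ y ∉ B
    · rw [cut_app_in _ B h2.1 h2.2]; simp [h2]
    · rw [cut_app_out _ _ h1, cut_app_out _ _ h2]; simp only [h1, h2]; norm_num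

theorem below_sup {C S B : Set (Fin n)} (hC : Pr C) (h : cut 1 C ≤ cut 1 S ⊔ cut 1 B) :
    C = S ∨ C = B ∨ C = S ∩ B ∨ C = S ∪ B := by
  rw [cut_le_sup] at h
  obtain ⟨⟨a, ha⟩, b, hb⟩ := hC
  by_cases h1 : ∃ x ∈ C, x ∈ S ∧ x ∉ B
  · obtain ⟨x, hx, hxS, hxB⟩ := h1
    by_cases h2 : ∃ y ∈ C, y ∈ B ∧ y ∉ S
    · obtain ⟨y, hy, hyB, hyS⟩ := h2
      right; right; right
      ext z
      have := h x hx z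
      have := h y hy z
      have hz := fun hzC : z ∈ C => h z hzC b hb
      simp only [Set.mem_union]
      tauto
    · left
      ext z
      have := h x hx z
      have hz := fun hzC : z ∈ C => h z hzC b hb
      have : ¬ (z ∈ C ∧ z ∈ B ∧ z ∉ S) := fun hh => h2 ⟨z, hh⟩
      tauto
  · by_cases h2 : ∃ y ∈ C, y ∈ B ∧ y ∉ S
    · obtain ⟨y, hy, hyB, hyS⟩ := h2
      right; left
      ext z
      have := h y hy z
      have hz := fun hzC : z ∈ C => h z hzC b hb
      have : ¬ (z ∈ C ∧ z ∈ S ∧ z ∉ B) := fun hh => h1 ⟨z, hh⟩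
      tauto
    · right; right; left
      ext z
      have ha2 : a ∈ S ∧ a ∈ B := by
        have h3 := h a ha b hb
        have h4 : ¬ (a ∈ C ∧ a ∈ S ∧ a ∉ B) := fun hh => h1 ⟨a, hh⟩
        have h5 : ¬ (a ∈ C ∧ a ∈ B ∧ a ∉ S) := fun hh => h2 ⟨a, hh⟩
        clear h h1 h2
        tauto
      have h3 := h a ha z
      have hz := fun hzC : z ∈ C => h z hzC b hb
      have h4 : ¬ (z ∈ C ∧ z ∈ S ∧ z ∉ B) := fun hh => h1 ⟨z, hh⟩
      have h5 : ¬ (z ∈ C ∧ z ∈ B ∧ z ∉ S) := fun hh => h2 ⟨z, hh⟩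
      clear h h1 h2
      simp only [Set.mem_inter_iff]
      tauto

theorem Mid_imp {S : Set (Fin n)} (h : Mid S) :
    ∃ B, Pr (S ∩ B) ∧ Pr (S ∪ B) ∧ S ∩ B ≠ S ∧ S ∪ B ≠ S := by
  obtain ⟨B, C, E, hB, hC, hE, h1, h2, h3, h4, h5, h6, h7⟩ := h
  refine ⟨B, ?_⟩
  rcases below_sup hC h6 with h | h | h | h
  · exact absurd h h1
  · exact absurd h h2
  · rcases below_sup hE h7 with h' | h' | h' | h'
    · exact absurd h' h3
    · exact absurd h' h4
    · exact absurd (h.trans h'.symm) h5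
    · subst h h'; exact ⟨hC, hE, h1, h3⟩
  · rcases below_sup hE h7 with h' | h' | h' | h'
    · exact absurd h' h3
    · exact absurd h' h4
    · subst h h'; exact ⟨hE, hC, h3, h1⟩
    · exact absurd (h.trans h'.symm) h5

theorem not_mid_single (i : Fin n) : ¬ Mid ({i} : Set (Fin n)) := by
  intro h
  obtain ⟨B, ⟨⟨a, ha⟩, _⟩, _, h3, _⟩ := Mid_imp h
  apply h3
  have : a = i := ha.1
  subst this
  simpa using ha.2

theorem not_mid_co (i : Fin n) : ¬ Mid ({i}ᶜ : Set (Fin n)) := by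
  intro h
  obtain ⟨B, _, ⟨_, b, hb⟩, _, h4⟩ := Mid_imp h
  apply h4
  have h1 : b = i := by
    by_contra hh
    exact hb (Or.inl hh)
  subst h1
  have h2 : b ∉ B := fun hh => hb (Or.inr hh)
  apply Set.union_eq_self_of_subset_right
  intro x hx hxb
  exact h2 (by rw [← show x = b from hxb]; exact hx)

theorem extreme_of_not_mid {S : Set (Fin n)} (hS : Pr S) (h : ¬ Mid S) :
    (∃ i, S = {i}) ∨ (∃ i, S = {i}ᶜ) := by
  by_contra hcon
  push Not at hcon
  obtain ⟨⟨a, ha⟩, c, hc⟩ := hS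
  have hb : ∃ b ∈ S, b ≠ a := by
    by_contra hh
    push Not at hh
    apply hcon.1 a
    ext x
    exact ⟨fun hx => hh x hx, fun hx => by rw [show x = a from hx]; exact ha⟩
  have hd : ∃ d ∉ S, d ≠ c := by
    by_contra hh
    push Not at hh
    apply hcon.2 c
    ext x
    exact ⟨fun hx hxc => hc (by rw [← show x = c from hxc]; exact hx),
      fun hx => by by_contra hxS; exact hx (hh x hxS)⟩
  obtain ⟨b, hb, hba⟩ := hb
  obtain ⟨d, hd, hdc⟩ := hd
  have hac : a ≠ c := fun h => hc (h ▸ ha)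
  have had : a ≠ d := fun h => hd (h ▸ ha)
  have hbc : b ≠ c := fun h => hc (h ▸ hb)
  apply h
  refine ⟨{a, c}, S ∩ {a, c}, S ∪ {a, c}, ⟨⟨a, by simp⟩, b, by simp [hba, hbc]⟩,
    ⟨⟨a, by simp [ha]⟩, c, by simp [hc]⟩, ⟨⟨a, by simp⟩, d, by simp [hd, hdc, had.symm]⟩,
    ?_, ?_, ?_, ?_, ?_, ?_, ?_⟩
  · intro h; have := Set.ext_iff.1 h b; simp [hb, hba, hbc] at this
  · intro h; have := Set.ext_iff.1 h c; simp [hc] at this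
  · intro h; have := Set.ext_iff.1 h c; simp [hc] at this
  · intro h; have := Set.ext_iff.1 h b; simp [hb, hba, hbc] at this
  · intro h; have := Set.ext_iff.1 h c; simp [hc] at this
  · rw [cut_le_sup]
    intro x hx y hy
    simp only [Set.mem_inter_iff] at hx hy
    tauto
  · rw [cut_le_sup]
    intro x hx y hy
    simp only [Set.mem_union] at hx hy
    tauto

theorem Pr_single (hn : 3 ≤ n) (i : Fin n) : Pr ({i} : Set (Fin n)) := by
  have : Nontrivial (Fin n) := Fin.nontrivial_iff_two_le.2 (by omega)
  obtain ⟨j, hj⟩ := exists_ne i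
  exact ⟨⟨i, rfl⟩, j, hj⟩

theorem Pr_compl {S : Set (Fin n)} (h : Pr S) : Pr Sᶜ := by
  obtain ⟨⟨a, ha⟩, b, hb⟩ := h
  exact ⟨⟨b, hb⟩, a, by simpa using ha⟩

theorem exists_third (hn : 3 ≤ n) (i j : Fin n) : ∃ k, k ≠ i ∧ k ≠ j := by
  have : ({i, j} : Finset (Fin n)).card < Fintype.card (Fin n) := by
    have := Finset.card_le_two (a := i) (b := j)
    simp only [Fintype.card_fin]; omega
  obtain ⟨k, hk⟩ := Finset.exists_mem_notMem_of_card_lt_card (s := {i, j}) (t := Finset.univ)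
    (by simpa using this)
  refine ⟨k, ?_⟩
  simpa using hk

theorem perm_case (hn : 3 ≤ n) (φ : EZ n ≃o EZ n)
    (h : ∀ i, ∃ j, φ (cut 1 {i}) = cut 1 {j}) :
    ∃ π : Equiv.Perm (Fin n), ∀ S, Pr S → φ (cut 1 S) = cut 1 (π '' S) := by
  choose p hp using h
  have hinj : Function.Injective p := by
    intro i j hij
    have := cut_inj (Pr_single hn i) (φ.injective ((hp i).trans ((congrArg _ (by rw [hij])).trans (hp j).symm)))
    simpa using this
  refine ⟨Equiv.ofBijective p (Finite.injective_iff_bijective.1 hinj), ?_⟩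
  have hsurj := (Finite.injective_iff_bijective.1 hinj).2
  intro S hS
  by_cases hs : ∃ i, S = {i}
  · obtain ⟨i, rfl⟩ := hs
    rw [hp]; simp
  · obtain ⟨T, hT, hST⟩ := cut_map φ hS
    rw [hST]
    have ht : ¬ ∃ j, T = {j} := by
      rintro ⟨j, rfl⟩
      obtain ⟨i, rfl⟩ := hsurj j
      exact hs ⟨i, cut_inj hS (φ.injective (hST.trans (hp i).symm))⟩
    have aux : ∀ (U : Set (Fin n)), Pr U → (¬ ∃ i, U = {i}) → ∀ i, (({i} : Set (Fin n)) ⊆ U ∨ U ⊆ {i}) ↔ i ∈ U := by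
      intro U hU hne i
      constructor
      · rintro (h | h)
        · simpa using h
        · exfalso
          rcases Set.subset_singleton_iff_eq.1 h with h | h
          · obtain ⟨⟨a, ha⟩, _⟩ := hU
            simp [h] at ha
          · exact hne ⟨i, h⟩
      · intro h; left; simpa using h
    congr 1
    ext y
    obtain ⟨x, rfl⟩ := hsurj y
    rw [← aux T hT ht, ← comp_map_iff (by omega) φ (hp x) hST, aux S hS hs]
    simp [hinj.eq_iff]

theorem types (hn : 3 ≤ n) (φ : EZ n ≃o EZ n) :
    (∀ i, ∃ j, φ (cut 1 {i}) = cut 1 {j}) ∨ (∀ i, ∃ j, φ (cut 1 {i}) = cut 1 {j}ᶜ) := by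
  have ext1 : ∀ i, (∃ j, φ (cut 1 {i}) = cut 1 {j}) ∨ (∃ j, φ (cut 1 {i}) = cut 1 {j}ᶜ) := by
    intro i
    obtain ⟨T, hT, e⟩ := cut_map φ (Pr_single hn i)
    rcases extreme_of_not_mid hT (fun hm => not_mid_single i
      (Mid_map φ.symm (by rw [← e]; simp) hm)) with ⟨j, rfl⟩ | ⟨j, rfl⟩
    · exact Or.inl ⟨j, e⟩
    · exact Or.inr ⟨j, e⟩
  by_contra hcon
  push Not at hcon
  obtain ⟨⟨i, hi⟩, j, hj⟩ := hcon
  obtain ⟨i', hi'⟩ := (ext1 i).resolve_left (fun ⟨k, hk⟩ => hi k hk)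
  obtain ⟨j', hj'⟩ := (ext1 j).resolve_right (fun ⟨k, hk⟩ => hj k hk)
  obtain ⟨k, hki, hkj⟩ := exists_third hn i j
  obtain ⟨T, hT, e⟩ := cut_map φ (Pr_compl (Pr_single hn k))
  have c1 := comp_map (by omega) φ hi' e (Or.inl (by simpa using hki))
  have c2 := comp_map (by omega) φ hj' e (Or.inl (by simpa using hkj))
  have n1 : ({i}: Set (Fin n)) ≠ {k}ᶜ := by
    intro h
    obtain ⟨m, hm1, hm2⟩ := exists_third hn i k
    have := Set.ext_iff.1 h m
    simp [hm1, hm2] at this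
  have n2 : ({j}: Set (Fin n)) ≠ {k}ᶜ := by
    intro h
    obtain ⟨m, hm1, hm2⟩ := exists_third hn j k
    have := Set.ext_iff.1 h m
    simp [hm1, hm2] at this
  have d1 : ({i'}ᶜ : Set (Fin n)) ≠ T := by
    rintro rfl
    exact n1 (cut_inj (Pr_single hn i) (φ.injective (hi'.trans e.symm)))
  have d2 : ({j'} : Set (Fin n)) ≠ T := by
    rintro rfl
    exact n2 (cut_inj (Pr_single hn j) (φ.injective (hj'.trans e.symm)))
  have hi'T : i' ∉ T := by
    rcases c1 with c1 | c1
    · intro hh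
      obtain ⟨_, b, hb⟩ := hT
      by_cases hbi : b = i'
      · subst hbi; exact hb hh
      · exact hb (c1 hbi)
    · intro hh; exact c1 hh rfl
  have hj'T : j' ∈ T := by
    rcases c2 with c2 | c2
    · exact c2 rfl
    · obtain ⟨⟨a, ha⟩, _⟩ := hT
      rw [← show a = j' from c2 ha]; exact ha
  rcases extreme_of_not_mid hT (fun hm => not_mid_co k
      (Mid_map φ.symm (by rw [← e]; simp) hm)) with ⟨m, rfl⟩ | ⟨m, rfl⟩
  · have : j' = m := hj'T
    subst this; exact d2 rfl
  · have : i' = m := by simpa using hi'T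
    subst this; exact d1 rfl

/-- transposition -/
def tr : EZ n ≃o EZ n where
  toFun A := ⟨fun i j => A.1 j i, mk_mem (fun i => diag A i) (fun i j => nonneg A j i)
    (fun i j k => by have := tri A k j i; omega)⟩
  invFun A := ⟨fun i j => A.1 j i, mk_mem (fun i => diag A i) (fun i j => nonneg A j i)
    (fun i j k => by have := tri A k j i; omega)⟩
  left_inv _ := rfl
  right_inv _ := rfl
  map_rel_iff' := by
    intro A B
    exact ⟨fun h i j => h j i, fun h i j => h j i⟩

theorem tr_app (A : EZ n) (i j : Fin n) : (tr A).1 i j = A.1 j i := rfl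

/-- relabelling -/
def rel (π : Equiv.Perm (Fin n)) : EZ n ≃o EZ n where
  toFun A := ⟨fun i j => A.1 (π i) (π j), mk_mem (fun i => diag A _) (fun i j => nonneg A _ _)
    (fun i j k => tri A _ _ _)⟩
  invFun A := ⟨fun i j => A.1 (π.symm i) (π.symm j), mk_mem (fun i => diag A _)
    (fun i j => nonneg A _ _) (fun i j k => tri A _ _ _)⟩
  left_inv A := by apply ext'; simp
  right_inv A := by apply ext'; simp
  map_rel_iff' := by
    intro A B
    refine ⟨fun h i j => ?_, fun h i j => h _ _⟩
    have := h (π.symm i) (π.symm j)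
    simpa using this

theorem rel_app (π : Equiv.Perm (Fin n)) (A : EZ n) (i j : Fin n) :
    (rel π A).1 i j = A.1 (π i) (π j) := rfl

theorem tr_cut (S : Set (Fin n)) : tr (cut 1 S) = cut 1 Sᶜ := by
  apply ext'
  intro i j
  rw [tr_app]
  by_cases h : j ∈ S ∧ i ∉ S
  · rw [cut_app_in _ _ h.1 h.2, cut_app_in _ _ h.2 (by simpa using h.1)]
  · rw [cut_app_out _ _ h, cut_app_out _ _ (by simp only [Set.mem_compl_iff]; tauto)]

theorem rel_cut (π : Equiv.Perm (Fin n)) (S : Set (Fin n)) : rel π (cut 1 (π '' S)) = cut 1 S := by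
  apply ext'
  intro i j
  rw [rel_app]
  by_cases h : i ∈ S ∧ j ∉ S
  · rw [cut_app_in _ _ h.1 h.2, cut_app_in _ _ (by simpa using h.1) (by simpa using h.2)]
  · rw [cut_app_out _ _ h, cut_app_out _ _ (by simpa using h)]

theorem perm_final (hn : 3 ≤ n) (φ : EZ n ≃o EZ n)
    (h : ∀ i, ∃ j, φ (cut 1 {i}) = cut 1 {j}) :
    ∃ π : Equiv.Perm (Fin n), ∀ A i j, (φ A).1 (π i) (π j) = A.1 i j := by
  obtain ⟨π, hπ⟩ := perm_case hn φ h
  refine ⟨π, fun A i j => ?_⟩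
  have := fix_all (by omega) (φ.trans (rel π)) (by
    intro S hS
    rw [OrderIso.trans_apply, hπ S hS, rel_cut]) A
  conv_rhs => rw [← this]
  rfl

theorem main_iso (hn : 3 ≤ n) (φ : EZ n ≃o EZ n) :
    ∃ π : Equiv.Perm (Fin n), (∀ A i j, (φ A).1 (π i) (π j) = A.1 i j) ∨
      (∀ A i j, (φ A).1 (π i) (π j) = A.1 j i) := by
  rcases types hn φ with h | h
  · obtain ⟨π, hπ⟩ := perm_final hn φ h
    exact ⟨π, Or.inl hπ⟩
  · obtain ⟨π, hπ⟩ := perm_final hn (φ.trans tr) (by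
      intro i
      obtain ⟨j, hj⟩ := h i
      refine ⟨j, ?_⟩
      rw [OrderIso.trans_apply, hj, tr_cut, compl_compl])
    exact ⟨π, Or.inr fun A i j => hπ A j i⟩

theorem main_bij (hn : 3 ≤ n) (φ : (Fin n → Fin n → ℤ) → (Fin n → Fin n → ℤ))
    (hbij : Set.BijOn φ (EZ n) (EZ n))
    (hhom : ∀ A ∈ EZ n, ∀ B ∈ EZ n, φ (A ⊔ B) = φ A ⊔ φ B) :
    ∃ π : Equiv.Perm (Fin n),
      (∀ A ∈ EZ n, ∀ i j : Fin n, i ≠ j → φ A (π i) (π j) = A i j) ∨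
      (∀ A ∈ EZ n, ∀ i j : Fin n, i ≠ j → φ A (π i) (π j) = A j i) := by
  let e : EZ n ≃ EZ n := hbij.equiv φ
  have he : ∀ A : EZ n, (e A).1 = φ A.1 := fun A => rfl
  let ψ : EZ n ≃o EZ n :=
    { e with
      map_rel_iff' := by
        intro A B
        change e A ≤ e B ↔ A ≤ B
        have hs : e (A ⊔ B) = e A ⊔ e B := Subtype.ext (hhom A.1 A.2 B.1 B.2)
        rw [← sup_eq_right, ← hs, e.injective.eq_iff, sup_eq_right] }
  obtain ⟨π, h⟩ := main_iso hn ψ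
  refine ⟨π, ?_⟩
  rcases h with h | h
  · left; intro A hA i j _; exact h ⟨A, hA⟩ i j
  · right; intro A hA i j _; exact h ⟨A, hA⟩ i j

end EZaux

end

/-- The automorphism group of the monoid `(E_n, ⊕)` (entrywise maximum) is `Sₙ × ℤ₂`:
every `⊕`-automorphism of `E_n` is a coordinate permutation, possibly composed with
transposition. -/
theorem stmt3 (n : ℕ) (hn : 3 ≤ n)
    (φ : (Fin n → Fin n → ℤ) → (Fin n → Fin n → ℤ))
    (hbij : Set.BijOn φ (EZ n) (EZ n))
    (hhom : ∀ A ∈ EZ n, ∀ B ∈ EZ n, φ (A ⊔ B) = φ A ⊔ φ B) :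
    ∃ π : Equiv.Perm (Fin n),
      (∀ A ∈ EZ n, ∀ i j : Fin n, i ≠ j → φ A (π i) (π j) = A i j) ∨
      (∀ A ∈ EZ n, ∀ i j : Fin n, i ≠ j → φ A (π i) (π j) = A j i) := by
  exact EZaux.main_bij hn φ hbij hhom
end

section
/- Let N be a finite type and let C be a subset of the functions N → ℕ such that 0 ∈ C, C is closed under pointwise addition, C is closed under pointwise maximum ⊕, and C is very full: for every i ∈ N, both 𝟙 + e_i and 𝟙 − e_i belong to C, where 𝟙 is the all-ones vector and e_i is the i-th standard basis vector. Let φ : C → C be a bijection with φ(u ⊕ v) = φ(u) ⊕ φ(v) for all u, v ∈ C. If there exists a positive integer r with φ(r·𝟙) = r·𝟙, then φ is permutational: there exists a permutation π of N such that φ(a)(π(i)) = a(i) for every a ∈ C and every i ∈ N. -/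
/-- The all-ones vector. -/
def oneVec (N : Type*) : N → ℕ := fun _ => 1

/-- The `i`-th standard basis vector (indicator of `i`). -/
def eVec {N : Type*} [DecidableEq N] (i : N) : N → ℕ := fun j => if j = i then 1 else 0

/-- `φ` and `ψ` are mutually inverse order isomorphisms of `C`. -/
structure OPair {N : Type*} (C : Set (N → ℕ)) (φ ψ : (N → ℕ) → (N → ℕ)) : Prop where
  m1 : ∀ a ∈ C, φ a ∈ C
  m2 : ∀ a ∈ C, ψ a ∈ C
  mono1 : ∀ a ∈ C, ∀ b ∈ C, a ≤ b → φ a ≤ φ b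
  mono2 : ∀ a ∈ C, ∀ b ∈ C, a ≤ b → ψ a ≤ ψ b
  inv1 : ∀ a ∈ C, ψ (φ a) = a
  inv2 : ∀ a ∈ C, φ (ψ a) = a

theorem OPair.symm {N : Type*} {C : Set (N → ℕ)} {φ ψ : (N → ℕ) → (N → ℕ)}
    (h : OPair C φ ψ) : OPair C ψ φ :=
  ⟨h.m2, h.m1, h.mono2, h.mono1, h.inv2, h.inv1⟩

theorem OPair.key {N : Type*} [Fintype N] {C : Set (N → ℕ)} {φ ψ : (N → ℕ) → (N → ℕ)}
    (h : OPair C φ ψ) (h0 : (0 : N → ℕ) ∈ C) (hmax : ∀ u ∈ C, ∀ v ∈ C, u ⊔ v ∈ C)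
    (i : N) (k : ℕ) (c : N → ℕ) (hc : c ∈ C)
    (hb : ∀ j, ∃ b ∈ C, b i ≤ k ∧ c j ≤ φ b j) : ψ c i ≤ k := by
  choose b hbC hbi hbj using hb
  have hB : (Finset.univ.sup b) ∈ C ∧ (Finset.univ.sup b) i ≤ k := by
    refine Finset.sup_induction (p := fun u => u ∈ C ∧ u i ≤ k) ⟨h0, Nat.zero_le _⟩ ?_ ?_
    · intro u hu v hv
      exact ⟨hmax u hu.1 v hv.1, sup_le hu.2 hv.2⟩
    · intro j _
      exact ⟨hbC j, hbi j⟩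
  have h1 : c ≤ φ (Finset.univ.sup b) := by
    intro j
    exact (hbj j).trans (h.mono1 _ (hbC j) _ hB.1 (Finset.le_sup (Finset.mem_univ j)) j)
  have h2 := h.mono2 _ hc _ (h.m1 _ hB.1) h1
  rw [h.inv1 _ hB.1] at h2
  exact (h2 i).trans hB.2

/-- `φ` maps the ideal `a i ≤ k` into the ideal `a j ≤ l`. -/
def SRel {N : Type*} (C : Set (N → ℕ)) (φ : (N → ℕ) → (N → ℕ)) (i : N) (k : ℕ) (j : N) (l : ℕ) :
    Prop := ∀ a ∈ C, a i ≤ k → φ a j ≤ l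

theorem OPair.exS {N : Type*} [Fintype N] {C : Set (N → ℕ)} {φ ψ : (N → ℕ) → (N → ℕ)}
    (h : OPair C φ ψ) (h0 : (0 : N → ℕ) ∈ C) (hmax : ∀ u ∈ C, ∀ v ∈ C, u ⊔ v ∈ C)
    (hk : ∀ k : ℕ, (fun _ => k : N → ℕ) ∈ C) (i : N) (k : ℕ) :
    ∃ j l, SRel C φ i k j l := by
  by_contra hcon
  simp only [SRel] at hcon
  push Not at hcon
  have := h.key h0 hmax i k (φ (fun _ => k + 1)) (h.m1 _ (hk _)) (by
    intro j
    obtain ⟨b, hb, h1, h2⟩ := hcon j (φ (fun _ => k + 1) j)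
    exact ⟨b, hb, h1, h2.le⟩)
  rw [h.inv1 _ (hk _)] at this
  simp at this

theorem OPair.uniq {N : Type*} [Fintype N] {C : Set (N → ℕ)} {φ ψ : (N → ℕ) → (N → ℕ)}
    (h : OPair C φ ψ) (h0 : (0 : N → ℕ) ∈ C) (hmax : ∀ u ∈ C, ∀ v ∈ C, u ⊔ v ∈ C)
    (hk : ∀ k : ℕ, (fun _ => k : N → ℕ) ∈ C)
    (hsep : ∀ (i : N) (k m : ℕ), ∃ a ∈ C, a i = k ∧ ∀ j, j ≠ i → m < a j)
    {i : N} {k k' : ℕ} {j j' : N} {l l' : ℕ}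
    (hs : SRel C φ i k j l) (hs' : SRel C φ i k' j' l') : j = j' := by
  have aux : ∀ (k : ℕ) (j : N) (l : ℕ), SRel C φ i k j l → ∃ k1, SRel C ψ j l i k1 := by
    intro k j l hs
    obtain ⟨i1, k1, h1⟩ := h.symm.exS h0 hmax hk j l
    obtain ⟨a, ha, hai, haj⟩ := hsep i k k1
    have e : i1 = i := by
      by_contra hne
      have h2 := h1 (φ a) (h.m1 _ ha) (hs a ha hai.le)
      rw [h.inv1 _ ha] at h2
      exact absurd (haj i1 hne) (by omega)
    subst e
    exact ⟨k1, h1⟩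
  obtain ⟨k1, h1⟩ := aux _ _ _ hs
  obtain ⟨k2, h2⟩ := aux _ _ _ hs'
  obtain ⟨j3, l3, h3⟩ := h.exS h0 hmax hk i (max k1 k2)
  have aux2 : ∀ (j : N) (l k1 : ℕ), SRel C ψ j l i k1 → k1 ≤ max k1 k2 ∨ True →
      (∀ a ∈ C, a j ≤ l → a j3 ≤ l3) → j = j3 := by
    intro j l k1 _ _ h5
    obtain ⟨a, ha, hai, haj⟩ := hsep j l l3
    by_contra hne
    have := haj j3 (fun e => hne e.symm)
    have := h5 a ha hai.le
    omega
  have e1 : j = j3 := aux2 j l k1 h1 (Or.inr trivial) (by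
    intro a ha hl
    have := h3 (ψ a) (h.m2 _ ha) ((h1 a ha hl).trans (le_max_left _ _))
    rwa [h.inv2 _ ha] at this)
  have e2 : j' = j3 := aux2 j' l' k2 h2 (Or.inr trivial) (by
    intro a ha hl
    have := h3 (ψ a) (h.m2 _ ha) ((h2 a ha hl).trans (le_max_right _ _))
    rwa [h.inv2 _ ha] at this)
  rw [e1, e2]

theorem OPair.exLe {N : Type*} [Fintype N] {C : Set (N → ℕ)} {φ ψ : (N → ℕ) → (N → ℕ)}
    (h : OPair C φ ψ) (h0 : (0 : N → ℕ) ∈ C) (hmax : ∀ u ∈ C, ∀ v ∈ C, u ⊔ v ∈ C)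
    (hk : ∀ k : ℕ, (fun _ => k : N → ℕ) ∈ C)
    (hsep : ∀ (i : N) (k m : ℕ), ∃ a ∈ C, a i = k ∧ ∀ j, j ≠ i → m < a j) (i : N) :
    ∃ j, ∀ a ∈ C, a i ≤ φ a j := by
  classical
  obtain ⟨j, l, hj⟩ := h.exS h0 hmax hk i 0
  have hex : ∀ k, ∃ l, SRel C φ i k j l := by
    intro k
    obtain ⟨j', l', h'⟩ := h.exS h0 hmax hk i k
    have e := h.uniq h0 hmax hk hsep hj h'
    subst e
    exact ⟨l', h'⟩
  let f : ℕ → ℕ := fun k => Nat.find (hex k)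
  have hf : ∀ k, SRel C φ i k j (f k) := fun k => Nat.find_spec (hex k)
  have hback : ∀ k, ∀ c ∈ C, c j ≤ f k → ψ c i ≤ k := by
    intro k c hc hcj
    refine h.key h0 hmax i k c hc ?_
    intro j'
    by_cases e : j' = j
    · subst e
      by_contra hcon
      push Not at hcon
      have h1 : SRel C φ i k j' (f k - 1) := by
        intro a ha hai
        have := hcon a ha hai
        omega
      have h2 : f k ≤ f k - 1 := Nat.find_min' (hex k) h1
      have := hcon 0 h0 (Nat.zero_le _)
      omega
    · by_contra hcon
      push Not at hcon
      have h1 : SRel C φ i k j' (c j') := fun a ha hai => (hcon a ha hai).le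
      exact e (h.uniq h0 hmax hk hsep h1 hj)
  have hback' : ∀ k, ∀ a ∈ C, φ a j ≤ f k → a i ≤ k := by
    intro k a ha hle
    have := hback k _ (h.m1 _ ha) hle
    rwa [h.inv1 _ ha] at this
  have hfm : StrictMono f := by
    refine strictMono_nat_of_lt_succ fun k => ?_
    by_contra hcon
    push Not at hcon
    have h1 := hback' k _ (hk (k + 1)) ((hf (k + 1) _ (hk _) le_rfl).trans hcon)
    simp at h1
  exact ⟨j, fun a ha => hback' _ a ha (hfm.le_apply)⟩

theorem OPair.sub {N : Type*} [Subsingleton N] {C : Set (N → ℕ)} {φ ψ : (N → ℕ) → (N → ℕ)}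
    (h : OPair C φ ψ) (i : N) : ∀ n : ℕ, ∀ a ∈ C, a i = n → a i ≤ φ a i := by
  intro n
  induction n using Nat.strong_induction_on with
  | _ n ih =>
    intro a ha hn
    by_contra hcon
    push Not at hcon
    have h1 := ih (φ a i) (by omega) (φ a) (h.m1 _ ha) rfl
    have h2 : φ a ≤ φ (φ a) := fun j => by rw [Subsingleton.elim j i]; exact h1
    have h3 := h.mono2 _ (h.m1 _ ha) _ (h.m1 _ (h.m1 _ ha)) h2
    rw [h.inv1 _ ha, h.inv1 _ (h.m1 _ ha)] at h3
    have h4 : a i ≤ φ a i := h3 i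
    omega

/-- A `⊕`-automorphism of a very full subset of `ℕ^N` closed under `+` and `⊕` which
fixes a nonzero multiple of the all-ones vector is permutational. -/
theorem stmt4 {N : Type*} [Fintype N] [DecidableEq N] (C : Set (N → ℕ))
    (h0 : (0 : N → ℕ) ∈ C)
    (hadd : ∀ u ∈ C, ∀ v ∈ C, u + v ∈ C)
    (hmax : ∀ u ∈ C, ∀ v ∈ C, u ⊔ v ∈ C)
    (hvf : ∀ i : N, oneVec N + eVec i ∈ C ∧ oneVec N - eVec i ∈ C)
    (φ : (N → ℕ) → (N → ℕ)) (hbij : Set.BijOn φ C C)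
    (hhom : ∀ u ∈ C, ∀ v ∈ C, φ (u ⊔ v) = φ u ⊔ φ v)
    (r : ℕ) (hr : 0 < r) (hrC : r • oneVec N ∈ C)
    (hfix : φ (r • oneVec N) = r • oneVec N) :
    ∃ π : Equiv.Perm N, ∀ a ∈ C, ∀ i : N, φ a (π i) = a i := by
  have hinj := hbij.injOn
  have hmono : ∀ a ∈ C, ∀ b ∈ C, a ≤ b → φ a ≤ φ b := by
    intro a ha b hb hab
    have := hhom a ha b hb
    rw [sup_eq_right.2 hab] at this
    exact sup_eq_right.1 this.symm
  have hrefl : ∀ a ∈ C, ∀ b ∈ C, φ a ≤ φ b → a ≤ b := by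
    intro a ha b hb hab
    have := hhom a ha b hb
    rw [sup_eq_right.2 hab] at this
    exact sup_eq_right.1 (hinj (hmax a ha b hb) hb this)
  have hm2 : ∀ a ∈ C, Function.invFunOn φ C a ∈ C := fun a ha =>
    Function.invFunOn_mem (hbij.surjOn ha)
  have hi2 : ∀ a ∈ C, φ (Function.invFunOn φ C a) = a := fun a ha =>
    Function.invFunOn_eq (hbij.surjOn ha)
  obtain ⟨ψ, h⟩ : ∃ ψ, OPair C φ ψ := by
    refine ⟨Function.invFunOn φ C, fun a ha => hbij.mapsTo ha, hm2, hmono, ?_, ?_, hi2⟩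
    · intro a ha b hb hab
      refine hrefl _ (hm2 a ha) _ (hm2 b hb) ?_
      rwa [hi2 a ha, hi2 b hb]
    · intro a ha
      exact hinj (hm2 _ (hbij.mapsTo ha)) ha (hi2 _ (hbij.mapsTo ha))
  rcases subsingleton_or_nontrivial N with hN | hN
  · refine ⟨Equiv.refl _, fun a ha i => ?_⟩
    have h1 := h.sub i _ a ha rfl
    have h2 := h.symm.sub i _ (φ a) (h.m1 _ ha) rfl
    rw [h.inv1 _ ha] at h2
    exact le_antisymm h2 h1
  have hsmul : ∀ (k : ℕ), ∀ u ∈ C, k • u ∈ C := by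
    intro k u hu
    induction k with
    | zero => simpa using h0
    | succ k ih => rw [succ_nsmul]; exact hadd _ ih _ hu
  have hone : oneVec N ∈ C := by
    obtain ⟨i, j, hij⟩ := exists_pair_ne N
    have e : oneVec N = (oneVec N - eVec i) ⊔ (oneVec N - eVec j) := by
      funext t
      by_cases h1 : t = i
      · subst h1
        simp [oneVec, eVec, hij]
      · simp [oneVec, eVec, h1]
    rw [e]
    exact hmax _ (hvf i).2 _ (hvf j).2
  have hk : ∀ k : ℕ, (fun _ => k : N → ℕ) ∈ C := by
    intro k
    have := hsmul k _ hone
    convert this using 1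
    funext t
    simp [oneVec]
  have hsep : ∀ (i : N) (k m : ℕ), ∃ a ∈ C, a i = k ∧ ∀ j, j ≠ i → m < a j := by
    intro i k m
    refine ⟨_, hadd _ (hk k) _ (hsmul (m + 1) _ (hvf i).2), ?_, ?_⟩
    · simp [oneVec, eVec]
    · intro j hj
      simp [oneVec, eVec, hj]
      omega
  choose π hπ using h.exLe h0 hmax hk hsep
  choose σ hσ using h.symm.exLe h0 hmax hk hsep
  have aux : ∀ t : N → N, (∀ a ∈ C, ∀ i, a i ≤ a (t i)) → ∀ i, t i = i := by
    intro t ht i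
    by_contra hne
    obtain ⟨a, ha, h1, h2⟩ := hsep (t i) 0 0
    have h3 := ht a ha i
    have h4 := h2 i (fun e => hne e.symm)
    omega
  have e1 : ∀ i, σ (π i) = i := aux (fun i => σ (π i)) (by
    intro a ha i
    have := (hπ i a ha).trans (hσ (π i) _ (h.m1 _ ha))
    rwa [h.inv1 _ ha] at this)
  have e2 : ∀ i, π (σ i) = i := aux (fun i => π (σ i)) (by
    intro a ha i
    have := (hσ i a ha).trans (hπ (σ i) _ (h.m2 _ ha))
    rwa [h.inv2 _ ha] at this)
  refine ⟨⟨π, σ, e1, e2⟩, fun a ha i => ?_⟩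
  have h1 := hσ (π i) _ (h.m1 _ ha)
  rw [h.inv1 _ ha, e1] at h1
  exact le_antisymm h1 (hπ i a ha)
end

section
/- Let N be a finite type and let C be a subset of the functions N → ℕ such that 0 ∈ C, C ≠ {0}, and C is closed under pointwise maximum ⊕. Suppose there is a subgroup G of the group of permutations of N acting transitively on N such that for every π ∈ G and every a ∈ C, the function a ∘ π belongs to C. Then every bijection φ : C → C with φ(u ⊕ v) = φ(u) ⊕ φ(v) for all u, v ∈ C fixes a nonzero multiple of the all-ones vector: there exists a positive integer k such that k·𝟙 ∈ C and φ(k·𝟙) = k·𝟙. -/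
theorem aux_ncard {N : Type*} (C : Set (N → ℕ)) (ψ : (N → ℕ) → (N → ℕ))
    (hb : Set.BijOn ψ C C) (hle : ∀ u ∈ C, ∀ v ∈ C, (ψ u ≤ ψ v ↔ u ≤ v)) (u : N → ℕ)
    (hu : u ∈ C) : (C ∩ Set.Iic (ψ u)).ncard = (C ∩ Set.Iic u).ncard := by
  have h : ψ '' (C ∩ Set.Iic u) = C ∩ Set.Iic (ψ u) := by
    ext x
    constructor
    · rintro ⟨y, ⟨hy, hyu⟩, rfl⟩
      exact ⟨hb.mapsTo hy, (hle y hy u hu).2 hyu⟩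
    · rintro ⟨hx, hxu⟩
      obtain ⟨y, hy, rfl⟩ := hb.surjOn hx
      exact ⟨y, ⟨hy, (hle y hy u hu).1 hxu⟩, rfl⟩
  rw [← h]
  exact Set.ncard_image_of_injOn (hb.injOn.mono Set.inter_subset_left)

theorem aux_eq {N : Type*} [Fintype N] (C : Set (N → ℕ)) (u v : N → ℕ) (hv : v ∈ C)
    (h : u ≤ v) (hd : (C ∩ Set.Iic v).ncard = (C ∩ Set.Iic u).ncard) : u = v := by
  classical
  have hfin : (C ∩ Set.Iic v).Finite := (Set.finite_Iic v).subset Set.inter_subset_right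
  have hs : C ∩ Set.Iic u ⊆ C ∩ Set.Iic v := fun x hx => ⟨hx.1, le_trans hx.2 h⟩
  have he := Set.eq_of_subset_of_ncard_le hs hd.le hfin
  have : v ∈ C ∩ Set.Iic u := by rw [he]; exact ⟨hv, Set.mem_Iic.2 le_rfl⟩
  exact le_antisymm h this.2

/-- If a `⊕`-submonoid `C ≠ {0}` of `ℕ^N` is invariant under a transitive group of
coordinate permutations, then every `⊕`-automorphism of `C` fixes a nonzero multiple
of the all-ones vector. -/
theorem stmt6 {N : Type*} [Fintype N] (C : Set (N → ℕ))
    (h0 : (0 : N → ℕ) ∈ C) (hne : C ≠ {0})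
    (hmax : ∀ u ∈ C, ∀ v ∈ C, u ⊔ v ∈ C)
    (G : Subgroup (Equiv.Perm N))
    (htrans : ∀ i j : N, ∃ π ∈ G, π i = j)
    (hGinv : ∀ π ∈ G, ∀ a ∈ C, (a ∘ π) ∈ C)
    (φ : (N → ℕ) → (N → ℕ)) (hbij : Set.BijOn φ C C)
    (hhom : ∀ u ∈ C, ∀ v ∈ C, φ (u ⊔ v) = φ u ⊔ φ v) :
    ∃ k : ℕ, 0 < k ∧ (fun _ : N => k) ∈ C ∧ φ (fun _ : N => k) = fun _ : N => k := by
  classical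
  obtain ⟨c, hc, hc0⟩ : ∃ c ∈ C, c ≠ 0 := by
    by_contra! h
    exact hne (Set.eq_singleton_iff_unique_mem.2 ⟨h0, h⟩)
  let S : Set (N → ℕ) := {u | u ∈ C ∧ (C ∩ Set.Iic u).ncard = (C ∩ Set.Iic c).ncard}
  have hS : S.Finite := by
    apply WellQuasiOrderedLE.finite_of_isAntichain
    intro u hu v hv huv hle
    exact huv (aux_eq C u v hv.1 hle (hv.2.trans hu.2.symm))
  let w : N → ℕ := hS.toFinset.sup id
  have hw : w ∈ C := by
    refine Finset.sup_induction (p := fun x => x ∈ C) h0 hmax ?_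
    intro b hb
    exact ((Set.Finite.mem_toFinset hS).1 hb).1
  have hub : ∀ u ∈ S, u ≤ w := fun u hu =>
    Finset.le_sup (f := id) ((Set.Finite.mem_toFinset hS).2 hu)
  have key : ∀ ψ : (N → ℕ) → (N → ℕ), Set.BijOn ψ C C →
      (∀ u ∈ C, ∀ v ∈ C, (ψ u ≤ ψ v ↔ u ≤ v)) → ψ w = w := by
    intro ψ hb hle
    refine (aux_eq C w (ψ w) (hb.mapsTo hw) ?_ (aux_ncard C ψ hb hle w hw)).symm
    refine Finset.sup_le ?_
    intro u hu
    have hu := (Set.Finite.mem_toFinset hS).1 hu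
    obtain ⟨y, hy, rfl⟩ := hb.surjOn hu.1
    exact (hle y hy w hw).2 (hub y ⟨hy, (aux_ncard C ψ hb hle y hy).symm.trans hu.2⟩)
  have hφ : φ w = w := by
    apply key φ hbij
    intro u hu v hv
    rw [← sup_eq_right, ← sup_eq_right, ← hhom u hu v hv]
    exact hbij.injOn.eq_iff (hmax u hu v hv) hv
  have hG : ∀ π ∈ G, w ∘ π = w := by
    intro π hπ
    apply key (fun a => a ∘ π)
    · refine ⟨fun a ha => hGinv π hπ a ha, ?_, ?_⟩
      · intro a _ b _ hab
        exact π.surjective.injective_comp_right hab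
      · intro a ha
        refine ⟨a ∘ (π⁻¹ : Equiv.Perm N), hGinv _ (G.inv_mem hπ) a ha, ?_⟩
        ext i
        simp
    · intro u _ v _
      constructor
      · intro h i
        simpa using h (π.symm i)
      · intro h i
        exact h (π i)
  obtain ⟨i, hi⟩ := Function.ne_iff.1 hc0
  have hconst : (fun _ : N => w i) = w := by
    ext j
    obtain ⟨π, hπ, rfl⟩ := htrans i j
    exact (congrFun (hG π hπ) i).symm
  refine ⟨w i, ?_, ?_, ?_⟩
  · exact lt_of_lt_of_le (Nat.pos_of_ne_zero hi) (hub c ⟨hc, rfl⟩ i)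
  · rw [hconst]; exact hw
  · rw [hconst]; exact hφ
end

section
/- Let N be a finite type, let S be a finite set of nonzero vectors in ℝ^N, and let C = {x ∈ ℝ^N : ⟨a, x⟩ ≥ 0 for all a ∈ S}, where ⟨a, x⟩ = Σ_i a_i x_i. Assume C is full-dimensional in the sense that there exists x with ⟨a, x⟩ > 0 for all a ∈ S, and that every a ∈ S is facet-defining: for each a ∈ S there exists x ∈ C with ⟨a, x⟩ = 0 and ⟨b, x⟩ > 0 for all b ∈ S with b ≠ a. Then C is closed under componentwise maximum if and only if every a ∈ S has at most one index i with a_i < 0. -/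
/-- A full-dimensional cone, given by an irredundant (facet-defining) system of
homogeneous linear inequalities, is closed under componentwise maximum if and only if
each inequality has at most one negative coefficient. -/
theorem stmt7 {N : Type*} [Fintype N] (S : Finset (N → ℝ))
    (hS0 : ∀ a ∈ S, a ≠ 0)
    (hfull : ∃ x : N → ℝ, ∀ a ∈ S, 0 < ∑ i, a i * x i)
    (hfacet : ∀ a ∈ S, ∃ x : N → ℝ,
      (∀ b ∈ S, 0 ≤ ∑ i, b i * x i) ∧
      (∑ i, a i * x i = 0) ∧
      (∀ b ∈ S, b ≠ a → 0 < ∑ i, b i * x i)) :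
    ((∀ x y : N → ℝ, (∀ a ∈ S, 0 ≤ ∑ i, a i * x i) → (∀ a ∈ S, 0 ≤ ∑ i, a i * y i) →
        ∀ a ∈ S, 0 ≤ ∑ i, a i * (x ⊔ y) i) ↔
      ∀ a ∈ S, {i : N | a i < 0}.Subsingleton) := by
  classical
  constructor
  · intro h a ha j hj k hk
    simp only [Set.mem_setOf_eq] at hj hk
    by_contra hjk
    obtain ⟨x, hx0, hxa, hxb⟩ := hfacet a ha
    set v : N → ℝ := Pi.single j (-a k) + Pi.single k (a j) with hv
    have hav : ∑ i, a i * v i = 0 := by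
      simp only [hv, Pi.add_apply, mul_add, Finset.sum_add_distrib, Pi.single_apply, mul_ite,
        mul_zero, Finset.sum_ite_eq', Finset.mem_univ, if_true]
      ring
    have hlin : ∀ (b : N → ℝ) (ε : ℝ), ∑ i, b i * (x + ε • v) i
        = ∑ i, b i * x i + ε * ∑ i, b i * v i := by
      intro b ε
      rw [Finset.mul_sum, ← Finset.sum_add_distrib]
      refine Finset.sum_congr rfl fun i _ => ?_
      simp only [Pi.add_apply, Pi.smul_apply, smul_eq_mul]
      ring
    have hev : ∀ᶠ ε in nhdsWithin (0 : ℝ) (Set.Ioi 0),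
        ∀ b ∈ S, 0 ≤ ∑ i, b i * x i + ε * ∑ i, b i * v i := by
      rw [Filter.eventually_all_finset]
      intro b hb
      by_cases hba : b = a
      · subst hba
        simp [hxa, hav]
      · have hc : Continuous fun ε : ℝ => ∑ i, b i * x i + ε * ∑ i, b i * v i := by fun_prop
        have := hc.tendsto 0
        simp only [zero_mul, add_zero] at this
        have h2 := (this.eventually (lt_mem_nhds (hxb b hb hba))).filter_mono
          (nhdsWithin_le_nhds (s := Set.Ioi 0))
        exact h2.mono fun ε hε => hε.le
    obtain ⟨ε, hε, hε0⟩ := (hev.and self_mem_nhdsWithin).exists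
    have hε0 : 0 < ε := hε0
    have key := h x (x + ε • v) hx0 (fun b hb => by rw [hlin]; exact hε b hb) a ha
    have hsup : x ⊔ (x + ε • v) = x + Pi.single j (ε * (-a k)) := by
      funext i
      simp only [Pi.sup_apply, Pi.add_apply, Pi.smul_apply, smul_eq_mul, hv]
      by_cases hij : i = j
      · subst hij
        have : 0 < ε * (-a k) := by nlinarith
        simp [Pi.single_apply, hjk]
        nlinarith
      · by_cases hik : i = k
        · subst hik
          simp [Pi.single_apply, hij]
          nlinarith
        · simp [Pi.single_apply, hij, hik]
    rw [hsup] at key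
    simp only [Pi.add_apply, mul_add, Finset.sum_add_distrib, Pi.single_apply, mul_ite,
        mul_zero, Finset.sum_ite_eq', Finset.mem_univ, if_true, hxa] at key
    have h1 : 0 < a j * a k := mul_pos_of_neg_of_neg hj hk
    nlinarith [mul_pos hε0 h1]
  · intro h x y hx hy a ha
    by_cases hn : ∃ j, a j < 0
    · obtain ⟨j, hj⟩ := hn
      have hpos : ∀ i, i ≠ j → 0 ≤ a i := fun i hij => by
        by_contra hc
        exact hij (h a ha (not_le.mp hc) hj)
      rcases le_total (y j) (x j) with hxy | hxy
      · refine (hx a ha).trans (Finset.sum_le_sum fun i _ => ?_)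
        by_cases hij : i = j
        · subst hij
          simp [hxy]
        · exact mul_le_mul_of_nonneg_left le_sup_left (hpos i hij)
      · refine (hy a ha).trans (Finset.sum_le_sum fun i _ => ?_)
        by_cases hij : i = j
        · subst hij
          simp [hxy]
        · exact mul_le_mul_of_nonneg_left le_sup_right (hpos i hij)
    · push Not at hn
      exact (hx a ha).trans (Finset.sum_le_sum fun i _ =>
        mul_le_mul_of_nonneg_left le_sup_left (hn i))
end

section
/- Let N be a finite type and a ∈ ℝ^N, and let H = {x ∈ ℝ^N : ⟨a, x⟩ ≥ 0}, where ⟨a, x⟩ = Σ_i a_i x_i. (a) If a has at most one index i with a_i < 0, then H is closed under componentwise maximum. (b) If a has at least two indices with negative coordinates, then for every u with ⟨a, u⟩ = 0 and every ε > 0 there exist x, y ∈ ℝ^N with ⟨a, x⟩ = 0, ⟨a, y⟩ = 0, ‖x − u‖ ≤ ε, ‖y − u‖ ≤ ε, and ⟨a, x ⊕ y⟩ < 0; in particular x ⊕ y ∉ H. -/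
/-- (a) A closed half-space `⟨a,·⟩ ≥ 0` with at most one negative coefficient is closed
under componentwise maximum.  (b) If `a` has at least two negative coefficients, then
arbitrarily close to any point of the bounding hyperplane there are two points of the
hyperplane whose componentwise maximum lies outside the half-space. -/
theorem stmt8 {N : Type*} [Fintype N] (a : N → ℝ) :
    (({i : N | a i < 0}.Subsingleton →
      ∀ x y : N → ℝ, 0 ≤ ∑ i, a i * x i → 0 ≤ ∑ i, a i * y i →
        0 ≤ ∑ i, a i * (x ⊔ y) i) ∧
    ((∃ r s : N, r ≠ s ∧ a r < 0 ∧ a s < 0) →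
      ∀ u : N → ℝ, ∑ i, a i * u i = 0 → ∀ ε : ℝ, 0 < ε →
        ∃ x y : N → ℝ,
          (∑ i, a i * x i = 0) ∧ (∑ i, a i * y i = 0) ∧
          Real.sqrt (∑ i, (x i - u i) ^ 2) ≤ ε ∧
          Real.sqrt (∑ i, (y i - u i) ^ 2) ≤ ε ∧
          ∑ i, a i * (x ⊔ y) i < 0)) := by
  classical
  constructor
  · intro h x y hx hy
    have key : (∀ i, a i < 0 → y i ≤ x i) ∨ (∀ i, a i < 0 → x i ≤ y i) := by
      by_contra! hc
      obtain ⟨⟨i, hi, hi2⟩, ⟨j, hj, hj2⟩⟩ := hc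
      have hij : i = j := h hi hj
      subst hij
      linarith
    rcases key with k | k
    · refine hx.trans (Finset.sum_le_sum fun i _ => ?_)
      rw [Pi.sup_apply]
      rcases lt_or_ge (a i) 0 with hi | hi
      · rw [sup_eq_left.2 (k i hi)]
      · exact mul_le_mul_of_nonneg_left le_sup_left hi
    · refine hy.trans (Finset.sum_le_sum fun i _ => ?_)
      rw [Pi.sup_apply]
      rcases lt_or_ge (a i) 0 with hi | hi
      · rw [sup_eq_right.2 (k i hi)]
      · exact mul_le_mul_of_nonneg_left le_sup_right hi
  · rintro ⟨r, s, hrs, hr, hs⟩ u hu ε hε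
    obtain ⟨d, hd⟩ : ∃ d : N → ℝ, d = fun i => (Pi.single r (a s) : N → ℝ) i - (Pi.single s (a r) : N → ℝ) i :=
      ⟨_, rfl⟩
    have hd0 : ∑ i, a i * d i = 0 := by
      simp [hd, mul_sub, Finset.sum_sub_distrib, Pi.single_apply]
      ring
    have habs : ∀ i, |d i| = (Pi.single r (-a s) : N → ℝ) i + (Pi.single s (-a r) : N → ℝ) i := by
      intro i
      rw [hd]
      by_cases h1 : i = r
      · subst h1
        simp [Pi.single_apply, hrs, abs_of_neg hs]
      · by_cases h2 : i = s
        · subst h2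
          simp [Pi.single_apply, h1, abs_of_neg hr]
        · simp [Pi.single_apply, h1, h2]
    have hd1 : ∑ i, a i * |d i| < 0 := by
      simp only [habs]
      simp [mul_add, Finset.sum_add_distrib, Pi.single_apply]
      nlinarith [mul_pos_of_neg_of_neg hr hs]
    have hS : 0 ≤ ∑ i, d i ^ 2 := Finset.sum_nonneg fun i _ => sq_nonneg _
    obtain ⟨t, ht⟩ : ∃ t : ℝ, t = ε / (1 + ∑ i, d i ^ 2) := ⟨_, rfl⟩
    have htp : 0 < t := by rw [ht]; positivity
    have hte : t * (1 + ∑ i, d i ^ 2) = ε := by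
      rw [ht]; field_simp
    have hn : t ^ 2 * ∑ i, d i ^ 2 ≤ ε ^ 2 := by
      rw [← hte, mul_pow]
      apply mul_le_mul_of_nonneg_left _ (sq_nonneg t)
      nlinarith
    refine ⟨fun i => u i + t * d i, fun i => u i - t * d i, ?_, ?_, ?_, ?_, ?_⟩
    · have : ∀ i, a i * (u i + t * d i) = a i * u i + t * (a i * d i) := fun i => by ring
      simp only [this, Finset.sum_add_distrib, ← Finset.mul_sum, hu, hd0]
      simp
    · have : ∀ i, a i * (u i - t * d i) = a i * u i - t * (a i * d i) := fun i => by ring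
      simp only [this, Finset.sum_sub_distrib, ← Finset.mul_sum, hu, hd0]
      simp
    · apply Real.sqrt_le_iff.2 ⟨hε.le, _⟩
      have : ∀ i, (u i + t * d i - u i) ^ 2 = t ^ 2 * d i ^ 2 := fun i => by ring
      simpa only [this, ← Finset.mul_sum] using hn
    · apply Real.sqrt_le_iff.2 ⟨hε.le, _⟩
      have : ∀ i, (u i - t * d i - u i) ^ 2 = t ^ 2 * d i ^ 2 := fun i => by ring
      simpa only [this, ← Finset.mul_sum] using hn
    · have : ∀ i, a i * ((fun i => u i + t * d i) ⊔ (fun i => u i - t * d i)) i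
          = a i * u i + t * (a i * |d i|) := by
        intro i
        rw [Pi.sup_apply]
        rcases le_total 0 (d i) with h | h
        · rw [abs_of_nonneg h, sup_eq_left.2 (by nlinarith)]
          ring
        · rw [abs_of_nonpos h, sup_eq_right.2 (by nlinarith)]
          ring
      simp only [this, Finset.sum_add_distrib, ← Finset.mul_sum, hu]
      nlinarith
end

section
/- Let n ≥ 3 and let A ∈ Ê_n be nonzero. Then there exists a nonempty proper subset I of Fin n such that supp(δ(I)) ⊆ supp(A), i.e., A_{ij} ≠ 0 whenever i ∈ I and j ∉ I. (The oriented cut quasi-semimetrics are the elements of Ê_n with minimal nonempty support.) -/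
/-- Every nonzero quasi-semimetric has support containing the support of some
oriented cut quasi-semimetric `δ(I)`. -/
theorem stmt10 (n : ℕ) (hn : 3 ≤ n) (A : Fin n → Fin n → ℝ)
    (hA : A ∈ QSM n) (hA0 : A ≠ 0) :
    ∃ I : Finset (Fin n), I.Nonempty ∧ I ≠ Finset.univ ∧
      ∀ i ∈ I, ∀ j ∉ I, A i j ≠ 0 := by
  classical
  obtain ⟨h0, hnn, htri⟩ := hA
  have hab : ∃ a b, A a b ≠ 0 := by
    by_contra! h
    exact hA0 (by ext a b; exact h a b)
  obtain ⟨a, b, hab⟩ := hab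
  refine ⟨Finset.univ.filter (fun x => A a x = 0), ⟨a, by simp [h0]⟩, ?_, ?_⟩
  · intro h
    have hb : b ∈ Finset.univ.filter (fun x => A a x = 0) := by
      rw [h]; exact Finset.mem_univ b
    exact hab (by simpa using hb)
  · intro i hi j hj hij
    have hi' : A a i = 0 := by simpa using hi
    have hj' : A a j ≠ 0 := by simpa using hj
    have h1 : a ≠ i := by rintro rfl; exact hj' hij
    have h2 : i ≠ j := by rintro rfl; exact hj' hi'
    have h3 : a ≠ j := by rintro rfl; exact hj' (h0 _)
    have h4 := htri a i j h1 h2 h3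
    have h5 := hnn a j h3
    exact hj' (by linarith)
end

section
/- Let n ≥ 3, let I be a nonempty proper subset of Fin n, and let A ∈ Ê_n satisfy supp(A) = supp(δ(I)), i.e., for all i ≠ j one has A_{ij} ≠ 0 if and only if i ∈ I and j ∉ I. Then there exists a real number c > 0 such that A = c · δ(I). -/
/-- The oriented cut quasi-semimetric `δ(I)`. -/
def cutQSM (n : ℕ) (I : Finset (Fin n)) : Fin n → Fin n → ℝ :=
  fun i j => if i ∈ I ∧ j ∉ I then 1 else 0

/-- A quasi-semimetric whose support equals the support of an oriented cut
quasi-semimetric `δ(I)` is a positive scalar multiple of `δ(I)`. -/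
theorem stmt11 (n : ℕ) (hn : 3 ≤ n) (I : Finset (Fin n))
    (hI : I.Nonempty) (hI' : I ≠ Finset.univ)
    (A : Fin n → Fin n → ℝ) (hA : A ∈ QSM n)
    (hsupp : ∀ i j : Fin n, i ≠ j → (A i j ≠ 0 ↔ (i ∈ I ∧ j ∉ I))) :
    ∃ c : ℝ, 0 < c ∧ A = c • cutQSM n I := by
  obtain ⟨h0, hnn, htri⟩ := hA
  have hz : ∀ i j : Fin n, ¬ (i ∈ I ∧ j ∉ I) → A i j = 0 := by
    intro i j h
    by_cases hij : i = j
    · subst hij; exact h0 i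
    · by_contra hne
      exact h ((hsupp i j hij).1 hne)
  have ht : ∀ i j k : Fin n, i ≠ k → A i k ≤ A i j + A j k := by
    intro i j k hik
    by_cases hij : i = j
    · subst hij; rw [h0]; simp
    · by_cases hjk : j = k
      · subst hjk; rw [h0]; simp
      · exact htri i j k hij hjk hik
  have hne : ∀ i j : Fin n, i ∈ I → j ∉ I → i ≠ j := by
    rintro i j hi hj rfl
    exact hj hi
  have hle : ∀ i j i' j' : Fin n, i ∈ I → j ∉ I → i' ∈ I → j' ∉ I →
      A i j ≤ A i' j' := by
    intro i j i' j' hi hj hi' hj'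
    have h1 := ht i i' j (hne i j hi hj)
    have h2 := ht i' j' j (hne i' j hi' hj)
    rw [hz i i' (fun h => h.2 hi')] at h1
    rw [hz j' j (fun h => hj' h.1)] at h2
    linarith
  obtain ⟨a, ha⟩ := hI
  obtain ⟨b, hb⟩ : ∃ b, b ∉ I := by
    by_contra h
    push Not at h
    exact hI' (Finset.eq_univ_iff_forall.2 h)
  have hab := hne a b ha hb
  refine ⟨A a b, lt_of_le_of_ne (hnn a b hab) (Ne.symm ((hsupp a b hab).2 ⟨ha, hb⟩)), ?_⟩
  funext i j
  simp only [Pi.smul_apply, smul_eq_mul, cutQSM]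
  by_cases h : i ∈ I ∧ j ∉ I
  · rw [if_pos h, mul_one]
    exact le_antisymm (hle i j a b h.1 h.2 ha hb) (hle a b i j ha hb h.1 h.2)
  · rw [if_neg h, mul_zero]
    exact hz i j h
end

section
/- Let n ≥ 3 and let I be a nonempty proper subset of Fin n. Then δ(I) ∈ Ê_n, and δ(I) spans an extreme ray of Ê_n: for all A, B ∈ Ê_n with A + B = δ(I), there exist real numbers c, d ≥ 0 such that A = c · δ(I) and B = d · δ(I). -/
theorem qsm_nonneg {n : ℕ} {A : Fin n → Fin n → ℝ} (hA : A ∈ QSM n) (i j : Fin n) :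
    0 ≤ A i j := by
  by_cases h : i = j
  · subst h; exact (hA.1 i).ge
  · exact hA.2.1 i j h

theorem qsm_tri {n : ℕ} {A : Fin n → Fin n → ℝ} (hA : A ∈ QSM n) (i j k : Fin n) :
    A i k ≤ A i j + A j k := by
  by_cases h : i = j
  · subst h; linarith [hA.1 i]
  by_cases h' : j = k
  · subst h'; linarith [hA.1 j]
  by_cases h'' : i = k
  · subst h''; linarith [hA.1 i, qsm_nonneg hA i j, qsm_nonneg hA j i]
  exact hA.2.2 i j k h h' h''

theorem qsm_cut {n : ℕ} {I : Finset (Fin n)} {A : Fin n → Fin n → ℝ} (hA : A ∈ QSM n)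
    (h0 : ∀ i j, ¬ (i ∈ I ∧ j ∉ I) → A i j = 0) {a b : Fin n} (ha : a ∈ I) (hb : b ∉ I) :
    A = A a b • cutQSM n I := by
  have key : ∀ i ∈ I, ∀ j ∉ I, ∀ k ∈ I, ∀ l ∉ I, A i j ≤ A k l := by
    intro i hi j hj k hk l hl
    have h1 := h0 i k (by tauto)
    have h2 := h0 l j (by tauto)
    linarith [qsm_tri hA i k j, qsm_tri hA k l j]
  funext i j
  by_cases h : i ∈ I ∧ j ∉ I
  · simp only [Pi.smul_apply, cutQSM, if_pos h, smul_eq_mul, mul_one]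
    exact le_antisymm (key i h.1 j h.2 a ha b hb) (key a ha b hb i h.1 j h.2)
  · simp only [Pi.smul_apply, cutQSM, if_neg h, smul_eq_mul, mul_zero]
    exact h0 i j h

/-- Every oriented cut quasi-semimetric `δ(I)` lies in `Ê_n` and spans an extreme ray
there. -/
theorem stmt12 (n : ℕ) (hn : 3 ≤ n) (I : Finset (Fin n))
    (hI : I.Nonempty) (hI' : I ≠ Finset.univ) :
    cutQSM n I ∈ QSM n ∧
    ∀ A ∈ QSM n, ∀ B ∈ QSM n, A + B = cutQSM n I →
      ∃ c d : ℝ, 0 ≤ c ∧ 0 ≤ d ∧ A = c • cutQSM n I ∧ B = d • cutQSM n I := by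
  constructor
  · refine ⟨?_, ?_, ?_⟩
    · intro i; simp [cutQSM]
    · intro i j _; unfold cutQSM; split_ifs <;> norm_num
    · intro i j k _ _ _
      by_cases hi : i ∈ I <;> by_cases hj : j ∈ I <;> by_cases hk : k ∈ I <;>
        simp [cutQSM, hi, hj, hk]
  · intro A hA B hB hAB
    obtain ⟨a, ha⟩ := hI
    obtain ⟨b, hb⟩ : ∃ b, b ∉ I := by
      by_contra! h
      exact hI' (Finset.eq_univ_iff_forall.2 h)
    have hs : ∀ i j, ¬ (i ∈ I ∧ j ∉ I) → A i j + B i j = 0 := by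
      intro i j h
      have := congrFun (congrFun hAB i) j
      simpa only [Pi.add_apply, cutQSM, if_neg h] using this
    refine ⟨A a b, B a b, qsm_nonneg hA a b, qsm_nonneg hB a b,
      qsm_cut hA ?_ ha hb, qsm_cut hB ?_ ha hb⟩
    · intro i j h
      linarith [hs i j h, qsm_nonneg hA i j, qsm_nonneg hB i j]
    · intro i j h
      linarith [hs i j h, qsm_nonneg hA i j, qsm_nonneg hB i j]
end

section
/- Let n ≥ 3 and let i, j, k ∈ Fin n be pairwise distinct. Then: (i) every A ∈ Ê_n with A_{ij} = 0 and A_{jk} = 0 satisfies A_{ik} = 0 and A_{ij} + A_{jk} = A_{ik}; and (ii) there exists H ∈ Ê_n with H_{ij} = H_{jk} = H_{ik} = 0, with H_{rs} > 0 for every ordered pair (r,s) of distinct indices other than (i,j), (j,k), (i,k), and with H_{rs} + H_{st} > H_{rt} for every triple (r,s,t) of pairwise distinct indices with (r,s,t) ≠ (i,j,k). (The only defining inequalities of Ê_n exactly satisfied by all of N_{ij} ∩ N_{jk} are N_{ij}, N_{jk}, N_{ik} and T_{ijk}.) -/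
/-- The potential used to build the witness. -/
noncomputable def potW {n : ℕ} (i k r : Fin n) : ℝ := if r = i then -1 else if r = k then 1 else 0

/-- The witness matrix. -/
noncomputable def matW {n : ℕ} (i j k r s : Fin n) : ℝ :=
  if r = s then 0 else if r = i ∧ s = j then 0 else if r = j ∧ s = k then 0
  else if r = i ∧ s = k then 0 else 11 + potW i k r - potW i k s

lemma matW_tri {n : ℕ} (i j k : Fin n) (hij : i ≠ j) (hjk : j ≠ k) (hik : i ≠ k)
    (r s t : Fin n) (hrs : r ≠ s) (hst : s ≠ t) (hrt : r ≠ t) (h : ¬ (r = i ∧ s = j ∧ t = k)) :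
    matW i j k r t < matW i j k r s + matW i j k s t := by
  have hji := hij.symm
  have hkj := hjk.symm
  have hki := hik.symm
  unfold matW potW
  by_cases r1 : r = i <;> by_cases r2 : r = j <;> by_cases r3 : r = k <;>
  by_cases s1 : s = i <;> by_cases s2 : s = j <;> by_cases s3 : s = k <;>
  by_cases t1 : t = i <;> by_cases t2 : t = j <;> by_cases t3 : t = k <;>
  first
  | (exfalso; grind)
  | (simp only [*, if_true, if_false, and_true, true_and, and_false, false_and, and_self, ne_eq, not_false_eq_true] at *; norm_num [*])

lemma matW_pos {n : ℕ} (i j k : Fin n) (r s : Fin n) (hrs : r ≠ s)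
    (h1 : ¬ (r = i ∧ s = j)) (h2 : ¬ (r = j ∧ s = k)) (h3 : ¬ (r = i ∧ s = k)) :
    0 < matW i j k r s := by
  unfold matW potW
  rw [if_neg hrs, if_neg h1, if_neg h2, if_neg h3]
  split_ifs <;> norm_num

/-- The only defining inequalities of `Ê_n` exactly satisfied by all of
`N_{ij} ∩ N_{jk}` are `N_{ij}`, `N_{jk}`, `N_{ik}` and `T_{ijk}`. -/
theorem stmt13 (n : ℕ) (hn : 3 ≤ n) (i j k : Fin n)
    (hij : i ≠ j) (hjk : j ≠ k) (hik : i ≠ k) :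
    (∀ A ∈ QSM n, A i j = 0 → A j k = 0 →
      A i k = 0 ∧ A i j + A j k = A i k) ∧
    (∃ H ∈ QSM n, H i j = 0 ∧ H j k = 0 ∧ H i k = 0 ∧
      (∀ r s : Fin n, r ≠ s → (r, s) ≠ (i, j) → (r, s) ≠ (j, k) → (r, s) ≠ (i, k) →
        0 < H r s) ∧
      (∀ r s t : Fin n, r ≠ s → s ≠ t → r ≠ t → (r, s, t) ≠ (i, j, k) →
        H r t < H r s + H s t)) := by
  have z1 : matW i j k i j = 0 := by simp [matW]
  have z2 : matW i j k j k = 0 := by simp [matW]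
  have z3 : matW i j k i k = 0 := by simp [matW]
  refine ⟨?_, matW i j k, ⟨?_, ?_, ?_⟩, z1, z2, z3, ?_, ?_⟩
  · rintro A ⟨-, h2, h3⟩ ha hb
    have := h2 i k hik
    have := h3 i j k hij hjk hik
    constructor <;> linarith
  · intro r
    simp [matW]
  · intro r s hrs
    by_cases h1 : r = i ∧ s = j
    · rw [h1.1, h1.2, z1]
    by_cases h2 : r = j ∧ s = k
    · rw [h2.1, h2.2, z2]
    by_cases h3 : r = i ∧ s = k
    · rw [h3.1, h3.2, z3]
    exact (matW_pos i j k r s hrs h1 h2 h3).le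
  · intro r s t hrs hst hrt
    by_cases h : r = i ∧ s = j ∧ t = k
    · obtain ⟨rfl, rfl, rfl⟩ := h
      rw [z1, z2, z3, add_zero]
    · exact (matW_tri i j k hij hjk hik r s t hrs hst hrt h).le
  · intro r s hrs h1 h2 h3
    exact matW_pos i j k r s hrs (by simpa using h1) (by simpa using h2) (by simpa using h3)
  · intro r s t hrs hst hrt h
    exact matW_tri i j k hij hjk hik r s t hrs hst hrt (by simpa using h)
end

section
/- Let n ≥ 3. (i) For every ordered pair (r,s) of distinct indices in Fin n, there exists A ∈ Ê_n with A_{rs} = 0, A_{ij} > 0 for all distinct (i,j) ≠ (r,s), and A_{ij} + A_{jk} > A_{ik} for all pairwise distinct i, j, k. (ii) For every triple (r,s,t) of pairwise distinct indices, there exists A ∈ Ê_n with A_{rs} + A_{st} = A_{rt}, with A_{ij} > 0 for all distinct i, j, and with A_{ij} + A_{jk} > A_{ik} for every pairwise distinct triple (i,j,k) ≠ (r,s,t). (Consequently all nonnegativity and triangle inequalities are facet-defining for Ê_n.) -/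
/-- All nonnegativity and triangle inequalities are facet-defining for `Ê_n`:
(i) for each ordered pair `(r,s)` of distinct indices there is a point of `Ê_n`
satisfying `N_{rs}` exactly and all other defining inequalities strictly;
(ii) for each triple `(r,s,t)` of pairwise distinct indices there is a point of `Ê_n`
satisfying `T_{rst}` exactly and all other defining inequalities strictly. -/
theorem stmt14 (n : ℕ) (hn : 3 ≤ n) :
    (∀ r s : Fin n, r ≠ s → ∃ A ∈ QSM n, A r s = 0 ∧
      (∀ i j : Fin n, i ≠ j → (i, j) ≠ (r, s) → 0 < A i j) ∧
      (∀ i j k : Fin n, i ≠ j → j ≠ k → i ≠ k → A i k < A i j + A j k)) ∧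
    (∀ r s t : Fin n, r ≠ s → s ≠ t → r ≠ t → ∃ A ∈ QSM n,
      A r s + A s t = A r t ∧
      (∀ i j : Fin n, i ≠ j → 0 < A i j) ∧
      (∀ i j k : Fin n, i ≠ j → j ≠ k → i ≠ k → (i, j, k) ≠ (r, s, t) →
        A i k < A i j + A j k)) := by
  constructor
  · intro r s hrs
    let A : Fin n → Fin n → ℝ := fun i j =>
      if i = j then 0 else if i = r ∧ j = s then 0 else if i = s ∨ j = r then 5 else 4
    have hT : ∀ i j k : Fin n, i ≠ j → j ≠ k → i ≠ k → A i k < A i j + A j k := by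
      intro i j k hij hjk hik
      simp only [A]
      split_ifs <;> first | norm_num; done | (exfalso; grind)
    have hN : ∀ i j : Fin n, i ≠ j → (i, j) ≠ (r, s) → 0 < A i j := by
      intro i j hij hne
      simp only [A]
      split_ifs <;> first | norm_num; done | (exfalso; grind)
    have h0 : A r s = 0 := by simp [A]
    refine ⟨A, ⟨fun i => by simp [A], fun i j hij => ?_,
      fun i j k h1 h2 h3 => (hT i j k h1 h2 h3).le⟩, h0, hN, hT⟩
    by_cases h : (i, j) = (r, s)
    · obtain ⟨rfl, rfl⟩ := Prod.mk.inj h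
      exact h0.ge
    · exact (hN i j hij h).le
  · intro r s t hrs hst hrt
    let A : Fin n → Fin n → ℝ := fun i j =>
      if i = j then 0 else if i = r ∧ j = t then 4
      else if (i = r ∧ j = s) ∨ (i = s ∧ j = t) then 2 else 3
    have hT : ∀ i j k : Fin n, i ≠ j → j ≠ k → i ≠ k → (i, j, k) ≠ (r, s, t) →
        A i k < A i j + A j k := by
      intro i j k hij hjk hik hne
      simp only [A]
      split_ifs <;> first | norm_num; done | (exfalso; grind)
    have hN : ∀ i j : Fin n, i ≠ j → 0 < A i j := by
      intro i j hij
      simp only [A]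
      split_ifs <;> first | norm_num; done | (exfalso; grind)
    have h0 : A r s + A s t = A r t := by
      simp only [A]
      split_ifs <;> first | norm_num; done | (exfalso; grind)
    refine ⟨A, ⟨fun i => by simp [A], fun i j hij => (hN i j hij).le,
      fun i j k h1 h2 h3 => ?_⟩, h0, hN, hT⟩
    by_cases h : (i, j, k) = (r, s, t)
    · simp only [Prod.mk.injEq] at h
      obtain ⟨rfl, rfl, rfl⟩ := h
      exact h0.ge
    · exact (hT i j k h1 h2 h3 h).le
end

section
/- Let n ≥ 3 and let A ∈ Ê_n be nonzero. Then s(A) ≥ n − 1, where s(A) is the number of ordered pairs (i,j) with i ≠ j and A_{ij} ≠ 0. Moreover, if s(A) = n − 1, then there exist a real number c > 0 and an index r ∈ Fin n such that A = c · R^(r) or A = c · C^(r). -/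
/-- The line `R^(r)`: all ones on row `r` off the diagonal, zero elsewhere. -/
def lineR (n : ℕ) (r : Fin n) : Fin n → Fin n → ℝ :=
  fun i j => if i = r ∧ j ≠ r then 1 else 0

/-- The line `C^(r)`: all ones on column `r` off the diagonal, zero elsewhere. -/
def lineC (n : ℕ) (r : Fin n) : Fin n → Fin n → ℝ :=
  fun i j => if j = r ∧ i ≠ r then 1 else 0

/-- `s(A)`: the number of nonzero off-diagonal entries of `A`. -/
noncomputable def sCount (n : ℕ) (A : Fin n → Fin n → ℝ) : ℕ :=
  (Finset.univ.filter fun p : Fin n × Fin n => p.1 ≠ p.2 ∧ A p.1 p.2 ≠ 0).card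

lemma aux15 (n : ℕ) (A : Fin n → Fin n → ℝ) (hA : A ∈ QSM n) (a b : Fin n) (hab : a ≠ b)
    (h : A a b ≠ 0) :
    n - 1 ≤ sCount n A ∧
    (sCount n A = n - 1 → ∀ i j : Fin n, i ≠ j → A i j ≠ 0 → i = a ∨ j = b) := by
  classical
  obtain ⟨h0, hp, ht⟩ := hA
  let f : Fin n → Fin n × Fin n := fun k => if A a k ≠ 0 then (a, k) else (k, b)
  have hinj : Set.InjOn f ((Finset.univ.erase a : Finset (Fin n)) : Set (Fin n)) := by
    intro x hx y hy hxy
    simp only [Finset.coe_erase, Finset.coe_univ, Set.mem_diff, Set.mem_univ, true_and,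
      Set.mem_singleton_iff] at hx hy
    simp only [f] at hxy
    split_ifs at hxy <;> simp only [Prod.mk.injEq] at hxy
    · exact hxy.2
    · exact absurd hxy.1.symm hy
    · exact absurd hxy.1 hx
    · exact hxy.1
  have hcard : ((Finset.univ.erase a).image f).card = n - 1 := by
    rw [Finset.card_image_of_injOn hinj, Finset.card_erase_of_mem (Finset.mem_univ a)]
    simp
  have hsub : (Finset.univ.erase a).image f ⊆
      Finset.univ.filter fun p : Fin n × Fin n => p.1 ≠ p.2 ∧ A p.1 p.2 ≠ 0 := by
    intro p hpm
    obtain ⟨k, hk, rfl⟩ := Finset.mem_image.1 hpm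
    have hka : k ≠ a := (Finset.mem_erase.1 hk).1
    simp only [Finset.mem_filter, Finset.mem_univ, true_and, f]
    by_cases hz : A a k = 0
    · have hkb : k ≠ b := by rintro rfl; exact h hz
      simp only [hz, ne_eq, not_true_eq_false, if_false]
      refine ⟨hkb, fun hz2 => h ?_⟩
      have h1 := ht a k b hka.symm hkb hab
      have h2 := hp a b hab
      linarith
    · simp only [ne_eq, hz, not_false_eq_true, if_true]
      exact ⟨hka.symm, trivial⟩
  unfold sCount
  refine ⟨hcard ▸ Finset.card_le_card hsub, fun hs i j hij hne => ?_⟩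
  have heq := Finset.eq_of_subset_of_card_le hsub (by
    rw [hcard]; exact le_of_eq (by convert hs))
  have hm : (i, j) ∈ (Finset.univ.erase a).image f := by
    rw [heq]; simp [hij, hne]
  obtain ⟨k, hk, hf⟩ := Finset.mem_image.1 hm
  simp only [f] at hf
  split_ifs at hf <;> simp only [Prod.mk.injEq] at hf
  · exact Or.inl hf.1.symm
  · exact Or.inr hf.2.symm

/-- A nonzero quasi-semimetric has at least `n - 1` nonzero entries, and if it has
exactly `n - 1` nonzero entries then it is a positive multiple of a line. -/
theorem stmt15 (n : ℕ) (hn : 3 ≤ n) (A : Fin n → Fin n → ℝ)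
    (hA : A ∈ QSM n) (hA0 : A ≠ 0) :
    n - 1 ≤ sCount n A ∧
    (sCount n A = n - 1 →
      ∃ c : ℝ, 0 < c ∧ ∃ r : Fin n, A = c • lineR n r ∨ A = c • lineC n r) := by
  obtain ⟨a, b, h⟩ : ∃ a b, A a b ≠ 0 := by
    by_contra! hc
    exact hA0 (by ext i j; exact hc i j)
  have key := aux15 n A hA
  obtain ⟨h0, hp, ht⟩ := hA
  have hab : a ≠ b := by rintro rfl; exact h (h0 a)
  refine ⟨(key a b hab h).1, fun hs => ?_⟩
  have hP := fun a b hab h => (key a b hab h).2 hs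
  have hpos : 0 < A a b := lt_of_le_of_ne (hp a b hab) h.symm
  refine ⟨A a b, hpos, ?_⟩
  by_cases hrow : ∀ i j, i ≠ j → i ≠ a → A i j = 0
  · refine ⟨a, Or.inl ?_⟩
    ext i j
    simp only [Pi.smul_apply, smul_eq_mul, lineR]
    by_cases hij : i = j
    · subst hij; simp [h0]
    by_cases hia : i = a
    · subst hia
      simp only [true_and, ne_eq, Ne.symm hij, not_false_eq_true, if_true, mul_one]
      by_cases hjb : j = b
      · rw [hjb]
      have h1 := ht i j b hij hjb hab
      have h2 := ht i b j hab (Ne.symm hjb) hij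
      rw [hrow j b hjb (Ne.symm hij)] at h1
      rw [hrow b j (Ne.symm hjb) hab.symm] at h2
      linarith
    · simp [hia, hrow i j hij hia]
  · push Not at hrow
    obtain ⟨l, m, hlm, hla, hne⟩ := hrow
    have hmb : m = b := (hP a b hab h l m hlm hne).resolve_left hla
    subst hmb
    have hcol : ∀ i j, i ≠ j → j ≠ m → A i j = 0 := by
      intro i j hij hj
      by_contra hc
      have e1 := (hP a m hab h i j hij hc).resolve_right hj
      have e2 := (hP l m hlm hne i j hij hc).resolve_right hj
      exact hla (e2.symm.trans e1)
    refine ⟨m, Or.inr ?_⟩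
    ext i j
    simp only [Pi.smul_apply, smul_eq_mul, lineC]
    by_cases hij : i = j
    · subst hij; simp [h0]
    by_cases hjm : j = m
    · subst hjm
      simp only [true_and, ne_eq, hij, not_false_eq_true, if_true, mul_one]
      by_cases hia : i = a
      · rw [hia]
      have h1 := ht i a j hia hab hij
      have h2 := ht a i j (Ne.symm hia) hij hab
      rw [hcol i a hia hab] at h1
      rw [hcol a i (Ne.symm hia) hij] at h2
      linarith
    · simp [hjm, hcol i j hij hjm]
end

section
/- Let n ≥ 3 and fix distinct i, j ∈ Fin n. Suppose a defining inequality F of Ê_n (so F is either a nonnegativity inequality N_{kl} with k ≠ l, or a triangle inequality T_{pqr} with p, q, r pairwise distinct) is satisfied exactly by precisely the same set of lines as N_{ij}, namely by every line L ∈ L_n except R^(i) and C^(j). Then F is the inequality N_{ij}. (The set of lines L for which L_{ij} = 0 determines N_{ij} among all defining inequalities.) -/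
/-- The set `L_n` of the `2n` lines. -/
def Lines (n : ℕ) : Set (Fin n → Fin n → ℝ) :=
  Set.range (lineR n) ∪ Set.range (lineC n)

/-- If a defining inequality of `Ê_n` (a nonnegativity inequality `N_{kl}` or a
triangle inequality `T_{pqr}`) is satisfied exactly by precisely the lines other than
`R^(i)` and `C^(j)`, then it is the inequality `N_{ij}`. -/
theorem stmt16 (n : ℕ) (hn : 3 ≤ n) (i j : Fin n) (hij : i ≠ j) :
    (∀ k l : Fin n, k ≠ l →
      (∀ L ∈ Lines n, (L k l = 0 ↔ (L ≠ lineR n i ∧ L ≠ lineC n j))) →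
      k = i ∧ l = j) ∧
    (∀ p q r : Fin n, p ≠ q → q ≠ r → p ≠ r →
      ¬ (∀ L ∈ Lines n, (L p q + L q r = L p r ↔ (L ≠ lineR n i ∧ L ≠ lineC n j)))) := by
  have hR : lineR n i ∈ Lines n := Or.inl ⟨i, rfl⟩
  have hC : lineC n j ∈ Lines n := Or.inr ⟨j, rfl⟩
  refine ⟨fun k l hkl h => ?_, fun p q r hpq hqr hpr h => ?_⟩
  · have h1 := h _ hR
    have h2 := h _ hC
    simp only [lineR, lineC, ne_eq, not_true_eq_false, false_and, and_false, iff_false] at h1 h2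
    constructor
    · by_contra hk
      simp [hk] at h1
    · by_contra hl
      simp [hl] at h2
  · have h1 := h _ hR
    have h2 := h _ hC
    simp only [ne_eq, not_true_eq_false, false_and, and_false, iff_false] at h1 h2
    have e1 : q = i := by
      by_contra hq
      apply h1
      by_cases hp : p = i
      · subst hp
        simp [lineR, hq, Ne.symm hpr]
      · simp [lineR, hq, hp]
    have e2 : q = j := by
      by_contra hq
      apply h2
      by_cases hr : r = j
      · subst hr
        simp [lineC, hq, hpr]
      · simp [lineC, hq, hr]
    exact hij (e1.symm.trans e2)
end

section
/- Let n ≥ 3 and A ∈ Ê_n. Let s(A) be the number of ordered pairs (i,j) with i ≠ j and A_{ij} > 0, and let p(A) be the number of unordered pairs {i,j} of distinct indices such that A_{ij} > 0 or A_{ji} > 0. Then the total number of defining inequalities of Ê_n that A satisfies strictly — that is, the number of ordered pairs (i,j), i ≠ j, with A_{ij} > 0, plus the number of triples (i,j,k) of pairwise distinct indices with A_{ij} + A_{jk} > A_{ik} — is at least (n − 2)·p(A) + s(A). -/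
/-- The number of defining inequalities of `Ê_n` satisfied strictly by `A`:
strict nonnegativity inequalities plus strict triangle inequalities. -/
noncomputable def strCount (n : ℕ) (A : Fin n → Fin n → ℝ) : ℕ :=
  (Finset.univ.filter fun p : Fin n × Fin n => p.1 ≠ p.2 ∧ 0 < A p.1 p.2).card +
  (Finset.univ.filter fun t : Fin n × Fin n × Fin n =>
    t.1 ≠ t.2.1 ∧ t.2.1 ≠ t.2.2 ∧ t.1 ≠ t.2.2 ∧
      A t.1 t.2.2 < A t.1 t.2.1 + A t.2.1 t.2.2).card

/-- `s(A)`: the number of ordered pairs `(i,j)`, `i ≠ j`, with `A i j > 0`. -/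
noncomputable def sPos (n : ℕ) (A : Fin n → Fin n → ℝ) : ℕ :=
  (Finset.univ.filter fun p : Fin n × Fin n => p.1 ≠ p.2 ∧ 0 < A p.1 p.2).card

/-- `p(A)`: the number of unordered pairs `{i,j}` of distinct indices such that
`A i j > 0` or `A j i > 0`. -/
noncomputable def pCount (n : ℕ) (A : Fin n → Fin n → ℝ) : ℕ :=
  (Finset.univ.filter fun p : Fin n × Fin n =>
    p.1 < p.2 ∧ (0 < A p.1 p.2 ∨ 0 < A p.2 p.1)).card

/-- Any `A ∈ Ê_n` satisfies at least `(n-2)·p(A) + s(A)` defining inequalities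
strictly. -/
theorem stmt17 (n : ℕ) (hn : 3 ≤ n) (A : Fin n → Fin n → ℝ) (hA : A ∈ QSM n) :
    (n - 2) * pCount n A + sPos n A ≤ strCount n A := by
  classical
  obtain ⟨_, h0, hT⟩ := hA
  have key : (n - 2) * pCount n A ≤ (Finset.univ.filter fun t : Fin n × Fin n × Fin n =>
      t.1 ≠ t.2.1 ∧ t.2.1 ≠ t.2.2 ∧ t.1 ≠ t.2.2 ∧
      A t.1 t.2.2 < A t.1 t.2.1 + A t.2.1 t.2.2).card := by
    unfold pCount
    set P := Finset.univ.filter fun p : Fin n × Fin n =>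
      p.1 < p.2 ∧ (0 < A p.1 p.2 ∨ 0 < A p.2 p.1) with hP
    have hc : (P.sigma (fun p => (Finset.univ \ {p.1, p.2} : Finset (Fin n)))).card
        = (n - 2) * P.card := by
      rw [Finset.card_sigma, Finset.sum_congr rfl (g := fun _ => n - 2), Finset.sum_const,
        smul_eq_mul, mul_comm]
      intro p hp
      have hlt : p.1 ≠ p.2 := by
        rw [hP, Finset.mem_filter] at hp
        exact hp.2.1.ne
      rw [Finset.card_sdiff_of_subset (Finset.subset_univ _), Finset.card_pair hlt]
      simp
    rw [← hc]
    apply Finset.card_le_card_of_injOn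
      (fun x => if A x.2 x.1.2 < A x.2 x.1.1 + A x.1.1 x.1.2 then (x.2, x.1.1, x.1.2)
        else (x.2, x.1.2, x.1.1))
    · rintro ⟨⟨i, j⟩, k⟩ hx
      simp only [hP, Finset.coe_sigma, Set.mem_sigma_iff, Finset.mem_coe, Finset.mem_filter,
        Finset.mem_univ, true_and, Finset.mem_sdiff, Finset.mem_insert, Finset.mem_singleton,
        not_or] at hx
      obtain ⟨⟨hij, hpos⟩, hki, hkj⟩ := hx
      have h1 := h0 i j hij.ne
      have h2 := h0 j i hij.ne'
      simp only [Finset.coe_filter, Finset.mem_univ, true_and, Set.mem_ofPred_eq]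
      split_ifs with h
      · exact ⟨hki, hij.ne, hkj, h⟩
      · refine ⟨hkj, hij.ne', hki, ?_⟩
        push Not at h
        show A k i < A k j + A j i
        rcases hpos with hp | hp <;> linarith
    · rintro ⟨⟨i, j⟩, k⟩ hx ⟨⟨i', j'⟩, k'⟩ hx' heq
      simp only [hP, Finset.coe_sigma, Set.mem_sigma_iff, Finset.mem_coe, Finset.mem_filter,
        Finset.mem_univ, true_and] at hx hx'
      have a := hx.1.1
      have b := hx'.1.1
      simp only at heq
      split_ifs at heq <;> simp only [Prod.mk.injEq] at heq <;>
        obtain ⟨rfl, rfl, rfl⟩ := heq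
      · rfl
      · exact absurd a (not_lt.mpr b.le)
      · exact absurd a (not_lt.mpr b.le)
      · rfl
  unfold sPos strCount
  omega
end

section
/- Let n ≥ 3. For A ∈ Ê_n, let str(A) denote the number of defining inequalities of Ê_n that A satisfies strictly, i.e., the number of ordered pairs (i,j), i ≠ j, with A_{ij} > 0, plus the number of triples (i,j,k) of pairwise distinct indices with A_{ij} + A_{jk} > A_{ik}. Then: (i) str(L) = (n − 1)² for every line L ∈ L_n; and (ii) if A ∈ Ê_n is nonzero and A is not a positive scalar multiple of any line in L_n, then str(A) > (n − 1)². (Equivalently, a line lies on exactly (n−1)³ of the n(n−1)² facets of Ê_n, and every other nonzero point of Ê_n lies on fewer; hence the set L_n is invariant under every combinatorial automorphism of Ê_n.) -/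
lemma aux_S_card (n : ℕ) (hn : 3 ≤ n) (r : Fin n) :
    (((Finset.univ.erase r).offDiag).image
      (fun p : Fin n × Fin n => (p.1, r, p.2))).card = (n - 1) * (n - 2) := by
  rw [Finset.card_image_of_injective]
  · rw [Finset.offDiag_card, Finset.card_erase_of_mem (Finset.mem_univ _), Finset.card_univ,
      Fintype.card_fin]
    obtain ⟨m, rfl⟩ := Nat.exists_eq_add_of_le hn
    have h1 : 3 + m - 1 = m + 2 := by omega
    have h2 : 3 + m - 2 = m + 1 := by omega
    rw [h1, h2]
    apply Nat.sub_eq_of_eq_add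
    ring
  · rintro ⟨a, b⟩ ⟨c, d⟩ h
    simpa using h

lemma aux_arith (n : ℕ) (hn : 3 ≤ n) : (n - 1) + (n - 1) * (n - 2) = (n - 1) ^ 2 := by
  obtain ⟨m, rfl⟩ := Nat.exists_eq_add_of_le hn
  have h1 : 3 + m - 1 = m + 2 := by omega
  have h2 : 3 + m - 2 = m + 1 := by omega
  rw [h1, h2]
  ring

lemma str_lineR (n : ℕ) (hn : 3 ≤ n) (r : Fin n) : strCount n (lineR n r) = (n - 1) ^ 2 := by
  unfold strCount
  have hP : (Finset.univ.filter fun p : Fin n × Fin n => p.1 ≠ p.2 ∧ 0 < lineR n r p.1 p.2)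
      = {r} ×ˢ (Finset.univ.erase r) := by
    ext ⟨i, j⟩
    simp only [Finset.mem_filter, Finset.mem_univ, true_and, Finset.mem_product,
      Finset.mem_singleton, Finset.mem_erase, and_true]
    simp only [lineR]
    split_ifs <;> grind
  have hS : (Finset.univ.filter fun t : Fin n × Fin n × Fin n =>
    t.1 ≠ t.2.1 ∧ t.2.1 ≠ t.2.2 ∧ t.1 ≠ t.2.2 ∧
      lineR n r t.1 t.2.2 < lineR n r t.1 t.2.1 + lineR n r t.2.1 t.2.2)
      = ((Finset.univ.erase r).offDiag).image (fun p : Fin n × Fin n => (p.1, r, p.2)) := by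
    ext ⟨i, j, k⟩
    simp only [Finset.mem_filter, Finset.mem_univ, true_and, Finset.mem_image,
      Finset.mem_offDiag, Finset.mem_erase, and_true, Prod.exists, Prod.mk.injEq]
    have hex : (∃ a b : Fin n, (a ≠ r ∧ b ≠ r ∧ a ≠ b) ∧ a = i ∧ r = j ∧ b = k) ↔
        (i ≠ r ∧ k ≠ r ∧ i ≠ k) ∧ r = j := by
      constructor
      · rintro ⟨a, b, h, rfl, rfl, rfl⟩
        exact ⟨h, rfl⟩
      · rintro ⟨h, h'⟩
        exact ⟨i, k, h, rfl, h', rfl⟩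
    rw [hex]
    simp only [lineR]
    split_ifs <;> norm_num <;> grind
  rw [hP, hS, aux_S_card n hn, Finset.card_product, Finset.card_singleton,
    Finset.card_erase_of_mem (Finset.mem_univ _), Finset.card_univ, Fintype.card_fin, one_mul,
    aux_arith n hn]

lemma str_lineC (n : ℕ) (hn : 3 ≤ n) (r : Fin n) : strCount n (lineC n r) = (n - 1) ^ 2 := by
  unfold strCount
  have hP : (Finset.univ.filter fun p : Fin n × Fin n => p.1 ≠ p.2 ∧ 0 < lineC n r p.1 p.2)
      = (Finset.univ.erase r) ×ˢ {r} := by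
    ext ⟨i, j⟩
    simp only [Finset.mem_filter, Finset.mem_univ, true_and, Finset.mem_product,
      Finset.mem_singleton, Finset.mem_erase, and_true]
    simp only [lineC]
    split_ifs <;> grind
  have hS : (Finset.univ.filter fun t : Fin n × Fin n × Fin n =>
    t.1 ≠ t.2.1 ∧ t.2.1 ≠ t.2.2 ∧ t.1 ≠ t.2.2 ∧
      lineC n r t.1 t.2.2 < lineC n r t.1 t.2.1 + lineC n r t.2.1 t.2.2)
      = ((Finset.univ.erase r).offDiag).image (fun p : Fin n × Fin n => (p.1, r, p.2)) := by
    ext ⟨i, j, k⟩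
    simp only [Finset.mem_filter, Finset.mem_univ, true_and, Finset.mem_image,
      Finset.mem_offDiag, Finset.mem_erase, and_true, Prod.exists, Prod.mk.injEq]
    have hex : (∃ a b : Fin n, (a ≠ r ∧ b ≠ r ∧ a ≠ b) ∧ a = i ∧ r = j ∧ b = k) ↔
        (i ≠ r ∧ k ≠ r ∧ i ≠ k) ∧ r = j := by
      constructor
      · rintro ⟨a, b, h, rfl, rfl, rfl⟩
        exact ⟨h, rfl⟩
      · rintro ⟨h, h'⟩
        exact ⟨i, k, h, rfl, h', rfl⟩
    rw [hex]
    simp only [lineC]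
    split_ifs <;> norm_num <;> grind
  rw [hP, hS, aux_S_card n hn, Finset.card_product, Finset.card_singleton,
    Finset.card_erase_of_mem (Finset.mem_univ _), Finset.card_univ, Fintype.card_fin, mul_one,
    aux_arith n hn]

/-- The star case: all entries avoiding the index `r` vanish. -/
lemma str_star (n : ℕ) (hn : 3 ≤ n) (A : Fin n → Fin n → ℝ)
    (h0 : ∀ i, A i i = 0) (hpos : ∀ i j, 0 ≤ A i j)
    (htri : ∀ i j k, A i k ≤ A i j + A j k) (hA : A ≠ 0)
    (hL : ∀ c : ℝ, 0 < c → ∀ L ∈ Lines n, A ≠ c • L) (r : Fin n)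
    (hr : ∀ j k, j ≠ r → k ≠ r → A j k = 0) : (n - 1) ^ 2 < strCount n A := by
  obtain ⟨s, hs⟩ : ∃ s : Fin n, s ≠ r := by
    have : Nontrivial (Fin n) := Fin.nontrivial_iff_two_le.mpr (by omega)
    exact exists_ne r
  have hrow : ∀ j, j ≠ r → A r j = A r s := by
    intro j hj
    have h1 := htri r s j
    have h2 := htri r j s
    rw [hr s j hs hj] at h1
    rw [hr j s hj hs] at h2
    linarith
  have hcol : ∀ j, j ≠ r → A j r = A s r := by
    intro j hj
    have h1 := htri s j r
    have h2 := htri j s r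
    rw [hr s j hs hj] at h1
    rw [hr j s hj hs] at h2
    linarith
  have hR : 0 < A s r := by
    by_contra hcon
    have hz : A s r = 0 := le_antisymm (not_lt.mp hcon) (hpos _ _)
    have hAe : A = (A r s) • lineR n r := by
      funext i j
      simp only [lineR, Pi.smul_apply, smul_eq_mul]
      split_ifs <;> grind
    rcases (hpos r s).eq_or_lt with h | h
    · apply hA
      rw [hAe, ← h, zero_smul]
    · exact hL _ h _ (Or.inl ⟨r, rfl⟩) hAe
  have hC : 0 < A r s := by
    by_contra hcon
    have hz : A r s = 0 := le_antisymm (not_lt.mp hcon) (hpos _ _)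
    have hAe : A = (A s r) • lineC n r := by
      funext i j
      simp only [lineC, Pi.smul_apply, smul_eq_mul]
      split_ifs <;> grind
    exact hL _ hR _ (Or.inr ⟨r, rfl⟩) hAe
  rw [← str_lineR n hn r]
  unfold strCount
  apply add_lt_add_of_lt_of_le
  · apply Finset.card_lt_card
    rw [Finset.ssubset_iff_of_subset]
    · refine ⟨(s, r), ?_, ?_⟩
      · simp [hs, hR]
      · simp only [Finset.mem_filter, Finset.mem_univ, true_and]
        simp [lineR]
    · rintro ⟨i, j⟩
      simp only [Finset.mem_filter, Finset.mem_univ, true_and]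
      simp only [lineR]
      split_ifs <;> grind
  · apply Finset.card_le_card
    rintro ⟨i, j, k⟩
    simp only [Finset.mem_filter, Finset.mem_univ, true_and]
    simp only [lineR]
    split_ifs <;> norm_num <;> grind

/-- The non-star case: every index has two partners. -/
lemma str_dense (n : ℕ) (hn : 3 ≤ n) (A : Fin n → Fin n → ℝ)
    (h0 : ∀ i, A i i = 0)
    (hd : ∀ i, ∃ r s, r ≠ s ∧ 0 < A i r + A r i ∧ 0 < A i s + A s i) :
    (n - 1) ^ 2 < strCount n A := by
  classical
  set P := Finset.univ.filter fun p : Fin n × Fin n => p.1 ≠ p.2 ∧ 0 < A p.1 p.2 with hP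
  set S := Finset.univ.filter fun t : Fin n × Fin n × Fin n =>
    t.1 ≠ t.2.1 ∧ t.2.1 ≠ t.2.2 ∧ t.1 ≠ t.2.2 ∧
      A t.1 t.2.2 < A t.1 t.2.1 + A t.2.1 t.2.2 with hS
  have hstr : strCount n A = P.card + S.card := rfl
  set Q := (Finset.univ : Finset (Fin n)).sigma
    (fun i => Finset.univ.filter fun j => 0 < A i j + A j i) with hQ
  have hQc : n * 2 ≤ Q.card := by
    rw [hQ, Finset.card_sigma]
    have := Finset.card_nsmul_le_sum (Finset.univ : Finset (Fin n))
      (fun i => (Finset.univ.filter fun j => 0 < A i j + A j i).card) 2 (by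
        intro i _
        obtain ⟨r, s, hrs, h1, h2⟩ := hd i
        rw [← Finset.card_pair hrs]
        apply Finset.card_le_card
        intro x hx
        simp only [Finset.mem_insert, Finset.mem_singleton] at hx
        rcases hx with rfl | rfl <;> simp [h1, h2])
    simpa using this
  have hQne : ∀ x ∈ Q, x.1 ≠ x.2 := by
    rintro ⟨i, j⟩ hx h
    have h' : i = j := h
    subst h'
    simp [hQ, h0] at hx
  have hPQ : Q.card ≤ P.card + P.card := by
    have hsub : Q ⊆ P.image (fun p => ⟨p.1, p.2⟩) ∪ P.image (fun p => ⟨p.2, p.1⟩) := by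
      rintro ⟨i, j⟩ hx
      have hne := hQne _ hx
      simp only [hQ, Finset.mem_sigma, Finset.mem_univ, Finset.mem_filter, true_and] at hx hne
      by_cases h : 0 < A i j
      · apply Finset.mem_union_left
        exact Finset.mem_image.mpr ⟨(i, j), by simp [hP, h, hne], rfl⟩
      · apply Finset.mem_union_right
        exact Finset.mem_image.mpr ⟨(j, i), by simp [hP, hne.symm]; linarith, rfl⟩
    exact (Finset.card_le_card hsub).trans ((Finset.card_union_le _ _).trans
      (add_le_add Finset.card_image_le Finset.card_image_le))
  have hSQ : Q.card * (n - 2) ≤ S.card + S.card := by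
    set T := Q.sigma (fun p => (Finset.univ.erase p.1).erase p.2) with hT
    have hTc : T.card = Q.card * (n - 2) := by
      rw [hT, Finset.card_sigma, Finset.sum_const_nat]
      intro x hx
      have hne := hQne x hx
      rw [Finset.card_erase_of_mem (by simp [hne.symm]),
        Finset.card_erase_of_mem (Finset.mem_univ _), Finset.card_univ, Fintype.card_fin]
      omega
    have hsub : T ⊆ S.image (fun t => ⟨⟨t.1, t.2.1⟩, t.2.2⟩) ∪
        S.image (fun t => ⟨⟨t.2.1, t.1⟩, t.2.2⟩) := by
      rintro ⟨⟨i, j⟩, k⟩ hx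
      rw [hT, Finset.mem_sigma] at hx
      obtain ⟨hx, hk⟩ := hx
      have hne := hQne _ hx
      simp only [hQ, Finset.mem_sigma, Finset.mem_univ, Finset.mem_filter, true_and,
        Finset.mem_erase, and_true] at hx hne hk
      by_cases h : A i k < A i j + A j k
      · apply Finset.mem_union_left
        exact Finset.mem_image.mpr ⟨(i, j, k), by simp [hS, h, hne, hk.1.symm, hk.2.symm], rfl⟩
      · apply Finset.mem_union_right
        refine Finset.mem_image.mpr ⟨(j, i, k), ?_, rfl⟩
        simp only [hS, Finset.mem_filter, Finset.mem_univ, true_and]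
        exact ⟨hne.symm, hk.2.symm, hk.1.symm, by linarith⟩
    rw [← hTc]
    exact (Finset.card_le_card hsub).trans ((Finset.card_union_le _ _).trans
      (add_le_add Finset.card_image_le Finset.card_image_le))
  rw [hstr]
  obtain ⟨m, rfl⟩ := Nat.exists_eq_add_of_le hn
  have h1 : 3 + m - 1 = m + 2 := by omega
  have h2 : 3 + m - 2 = m + 1 := by omega
  rw [h2] at hSQ
  rw [h1]
  nlinarith

theorem stmt18 (n : ℕ) (hn : 3 ≤ n) :
    (∀ L ∈ Lines n, strCount n L = (n - 1) ^ 2) ∧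
    (∀ A ∈ QSM n, A ≠ 0 → (∀ c : ℝ, 0 < c → ∀ L ∈ Lines n, A ≠ c • L) →
      (n - 1) ^ 2 < strCount n A) := by
  refine ⟨?_, ?_⟩
  · rintro L (⟨r, rfl⟩ | ⟨r, rfl⟩)
    · exact str_lineR n hn r
    · exact str_lineC n hn r
  · rintro A ⟨h0, hp, ht⟩ hA hL
    have hpos : ∀ i j, 0 ≤ A i j := by
      intro i j
      by_cases h : i = j
      · rw [h, h0]
      · exact hp i j h
    have htri : ∀ i j k, A i k ≤ A i j + A j k := by
      intro i j k
      by_cases h1 : i = j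
      · subst h1; simp [h0]
      by_cases h2 : j = k
      · subst h2; simp [h0]
      by_cases h3 : i = k
      · subst h3; rw [h0]; exact add_nonneg (hpos _ _) (hpos _ _)
      exact ht i j k h1 h2 h3
    by_cases hd : ∀ i, ∃ r s, r ≠ s ∧ 0 < A i r + A r i ∧ 0 < A i s + A s i
    · exact str_dense n hn A h0 hd
    · push Not at hd
      obtain ⟨i, hi⟩ := hd
      obtain ⟨r, hr⟩ : ∃ r, ∀ s, s ≠ r → A i s + A s i ≤ 0 := by
        by_cases h : ∃ r, 0 < A i r + A r i
        · obtain ⟨r, hr⟩ := h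
          exact ⟨r, fun s hs => hi r s hs.symm hr⟩
        · push Not at h
          exact ⟨i, fun s _ => h s⟩
      refine str_star n hn A h0 hpos htri hA hL r ?_
      intro j k hj hk
      have a1 := hr j hj
      have a2 := hr k hk
      have a3 := htri j i k
      have := hpos i j
      have := hpos j i
      have := hpos i k
      have := hpos k i
      have := hpos j k
      linarith
end
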